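/- arXiv:1606.02623 — 4 statements merged into one kernel-verified Lean document; each statement's English description precedes it below -/
import Mathlib

section
/- Let d ≥ 2 and let φ : ℝᵈ → ℝ be a nonnegative, continuously differentiable, strictly convex function; set ψ = |·|² + φ. Let σ be the pushforward of Lebesgue measure on ℝᵈ under y ↦ (y, ψ(y)) and σ₀ the pushforward of Lebesgue measure on ℝᵈ under y ↦ (y, |y|²), both Borel measures on ℝ^{d+1}. Then σ∗σ and σ₀∗σ₀ are absolutely continuous with respect to Lebesgue measure on ℝ^{d+1}, and for Lebesgue-almost every (ξ, τ) ∈ ℝᵈ × (0, ∞) the Radon–Nikodym derivatives satisfy the strict inequality d(σ∗σ)/dLeb (ξ, 2ψ(ξ/2) + τ) < d(σ₀∗σ₀)/dLeb (ξ, |ξ|²/2 + τ). -/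
open MeasureTheory Filter
open scoped ENNReal

noncomputable section

open Set Metric

/-- The substitution `τ = G r` on `(0, ∞)`, with the inverse of `G` written as the length of its
sublevel sets. -/
theorem lintegral_Ioi_comp_eq_of_hasDerivAt {G G' : ℝ → ℝ} (hG : ∀ r, HasDerivAt G (G' r) r)
    (hpos : ∀ r, 0 < r → 0 < G' r) (h0 : G 0 = 0) (hle : ∀ r, 0 < r → 2 * r ^ 2 ≤ G r)
    (w : ℝ → ℝ) (f : ℝ → ℝ≥0∞) :
    ∫⁻ r in Ioi 0, ENNReal.ofReal (w r) * f (G r) =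
      ∫⁻ τ in Ioi 0, ENNReal.ofReal (w (volume {r | 0 < r ∧ G r < τ}).toReal /
        G' (volume {r | 0 < r ∧ G r < τ}).toReal) * f τ := by
  have hcont : Continuous G := continuous_iff_continuousAt.2 fun r => (hG r).continuousAt
  have hmono : StrictMonoOn G (Ici 0) := by
    refine strictMonoOn_of_deriv_pos (convex_Ici 0) hcont.continuousOn fun r hr => ?_
    rw [interior_Ici] at hr
    rw [(hG r).deriv]
    exact hpos r hr
  have himage : G '' Ioi 0 = Ioi 0 := by
    ext τ
    constructor
    · rintro ⟨r, hr, rfl⟩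
      rw [mem_Ioi, ← h0]
      exact hmono self_mem_Ici (Ioi_subset_Ici_self hr) hr
    · intro hτ
      have hτ' : 0 < τ := hτ
      have hmem : τ ∈ Ioc (G 0) (G (τ + 1)) :=
        ⟨by rwa [h0], le_trans (by nlinarith) (hle (τ + 1) (by linarith))⟩
      obtain ⟨r, hr, rfl⟩ := intermediate_value_Ioc (by linarith) hcont.continuousOn hmem
      exact ⟨r, hr.1, rfl⟩
  have hvol : ∀ r, 0 < r → (volume {s | 0 < s ∧ G s < G r}).toReal = r := by
    intro r hr
    have : {s | 0 < s ∧ G s < G r} = Ioo 0 r := by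
      ext s
      refine and_congr_right fun hs => hmono.lt_iff_lt (le_of_lt hs) (le_of_lt hr)
    rw [this, Real.volume_Ioo, sub_zero, ENNReal.toReal_ofReal hr.le]
  conv_rhs => rw [← himage]
  rw [lintegral_image_eq_lintegral_abs_deriv_mul measurableSet_Ioi
    (fun r _ => (hG r).hasDerivWithinAt) (hmono.injOn.mono Ioi_subset_Ici_self)]
  refine setLIntegral_congr_fun measurableSet_Ioi fun r hr => ?_
  have hr' := hpos r hr
  simp only [hvol r hr]
  rw [← mul_assoc, ← ENNReal.ofReal_mul (abs_nonneg _), abs_of_pos hr', mul_div_cancel₀ _ hr'.ne']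

variable {E : Type*} [NormedAddCommGroup E] [InnerProductSpace ℝ E]

/-- The amount by which `ψ (x + r • θ) + ψ (x - r • θ)` exceeds `2 * ψ x`, for `ψ = ‖·‖ ^ 2 + φ`
and a unit vector `θ`. -/
def heightGap (φ : E → ℝ) (x θ : E) (r : ℝ) : ℝ :=
  2 * r ^ 2 + (φ (x + r • θ) + φ (x - r • θ) - 2 * φ x)

/-- The derivative of `heightGap φ x θ`. -/
def heightGapDeriv (φ : E → ℝ) (x θ : E) (r : ℝ) : ℝ :=
  4 * r + (fderiv ℝ φ (x + r • θ) θ - fderiv ℝ φ (x - r • θ) θ)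

/-- The radius at which `heightGap φ x θ` takes the value `τ`. -/
def levelRadius (φ : E → ℝ) (x θ : E) (τ : ℝ) : ℝ :=
  (volume {r | 0 < r ∧ heightGap φ x θ r < τ}).toReal

/-- The density of the image of `r ^ (dim E - 1) dr` under `heightGap φ x θ`. -/
def rayDensity (φ : E → ℝ) (x θ : E) (τ : ℝ) : ℝ≥0∞ :=
  ENNReal.ofReal (levelRadius φ x θ τ ^ (Module.finrank ℝ E - 1) /
    heightGapDeriv φ x θ (levelRadius φ x θ τ))

theorem hasDerivAt_comp_add_smul {φ : E → ℝ} (hφ : Differentiable ℝ φ) (x θ : E) (r : ℝ) :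
    HasDerivAt (fun t : ℝ => φ (x + t • θ)) (fderiv ℝ φ (x + r • θ) θ) r := by
  have h : HasDerivAt (fun t : ℝ => x + t • θ) θ r := by
    simpa using ((hasDerivAt_id r).smul_const θ).const_add x
  exact (hφ _).hasFDerivAt.comp_hasDerivAt r h

theorem hasDerivAt_heightGap {φ : E → ℝ} (hφ : Differentiable ℝ φ) (x θ : E) (r : ℝ) :
    HasDerivAt (heightGap φ x θ) (heightGapDeriv φ x θ r) r := by
  have h₁ := hasDerivAt_comp_add_smul hφ x θ r
  have h₂ := hasDerivAt_comp_add_smul hφ x (-θ) r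
  simp only [smul_neg, ← sub_eq_add_neg, map_neg] at h₂
  have h₃ : HasDerivAt (fun t : ℝ => 2 * t ^ 2) (4 * r) r := by
    refine ((hasDerivAt_pow 2 r).const_mul 2).congr_deriv ?_
    norm_num
    ring
  exact h₃.add ((h₁.add h₂).sub_const _)

theorem heightGap_zero_right (φ : E → ℝ) (x θ : E) : heightGap φ x θ 0 = 0 := by
  simp [heightGap, two_mul]

theorem two_mul_sq_le_heightGap {φ : E → ℝ} (hφ : ConvexOn ℝ univ φ) (x θ : E) (r : ℝ) :
    2 * r ^ 2 ≤ heightGap φ x θ r := by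
  have h := hφ.2 (mem_univ (x + r • θ)) (mem_univ (x - r • θ))
    (show (0 : ℝ) ≤ 1 / 2 by norm_num) (show (0 : ℝ) ≤ 1 / 2 by norm_num) (by norm_num)
  have hx : (1 / 2 : ℝ) • (x + r • θ) + (1 / 2 : ℝ) • (x - r • θ) = x := by module
  rw [hx, smul_eq_mul, smul_eq_mul] at h
  unfold heightGap
  linarith

theorem convexOn_comp_add_smul {φ : E → ℝ} (hφ : ConvexOn ℝ univ φ) (x θ : E) :
    ConvexOn ℝ univ fun t : ℝ => φ (x + t • θ) := by
  refine ⟨convex_univ, fun s _ t _ a b ha hb hab => ?_⟩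
  have hx : x + (a • s + b • t) • θ = a • (x + s • θ) + b • (x + t • θ) := by
    obtain rfl : b = 1 - a := by linarith
    simp only [smul_eq_mul]
    module
  simp only [hx]
  exact hφ.2 (mem_univ _) (mem_univ _) ha hb hab

theorem strictConvexOn_comp_add_smul {φ : E → ℝ} (hφ : StrictConvexOn ℝ univ φ) (x : E) {θ : E}
    (hθ : θ ≠ 0) : StrictConvexOn ℝ univ fun t : ℝ => φ (x + t • θ) := by
  refine ⟨convex_univ, fun s _ t _ hst a b ha hb hab => ?_⟩
  have hx : x + (a • s + b • t) • θ = a • (x + s • θ) + b • (x + t • θ) := by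
    obtain rfl : b = 1 - a := by linarith
    simp only [smul_eq_mul]
    module
  simp only [hx]
  exact hφ.2 (mem_univ _) (mem_univ _)
    (fun h => hst (smul_left_injective ℝ hθ (add_left_cancel h))) ha hb hab

theorem four_mul_le_heightGapDeriv {φ : E → ℝ} (hd : Differentiable ℝ φ)
    (hφ : ConvexOn ℝ univ φ) (x θ : E) {r : ℝ} (hr : 0 < r) :
    4 * r ≤ heightGapDeriv φ x θ r := by
  have h := (convexOn_comp_add_smul hφ x θ).monotoneOn_deriv
    (fun t _ => (hasDerivAt_comp_add_smul hd x θ t).differentiableAt)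
    (mem_univ (-r)) (mem_univ r) (by linarith)
  rw [(hasDerivAt_comp_add_smul hd x θ _).deriv, (hasDerivAt_comp_add_smul hd x θ _).deriv,
    neg_smul, ← sub_eq_add_neg] at h
  unfold heightGapDeriv
  linarith

theorem four_mul_lt_heightGapDeriv {φ : E → ℝ} (hd : Differentiable ℝ φ)
    (hφ : StrictConvexOn ℝ univ φ) (x : E) {θ : E} (hθ : θ ≠ 0) {r : ℝ} (hr : 0 < r) :
    4 * r < heightGapDeriv φ x θ r := by
  have h := (strictConvexOn_comp_add_smul hφ x hθ).strictMonoOn_deriv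
    (fun t _ => (hasDerivAt_comp_add_smul hd x θ t).differentiableAt)
    (mem_univ (-r)) (mem_univ r) (by linarith)
  rw [(hasDerivAt_comp_add_smul hd x θ _).deriv, (hasDerivAt_comp_add_smul hd x θ _).deriv,
    neg_smul, ← sub_eq_add_neg] at h
  unfold heightGapDeriv
  linarith

theorem lintegral_Ioi_heightGap {φ : E → ℝ} (hd : Differentiable ℝ φ) (hφ : ConvexOn ℝ univ φ)
    (x θ : E) (f : ℝ → ℝ≥0∞) :
    ∫⁻ r in Ioi 0, ENNReal.ofReal (r ^ (Module.finrank ℝ E - 1)) * f (heightGap φ x θ r) =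
      ∫⁻ τ in Ioi 0, rayDensity φ x θ τ * f τ :=
  lintegral_Ioi_comp_eq_of_hasDerivAt (hasDerivAt_heightGap hd x θ)
    (fun _ hr => lt_of_lt_of_le (by positivity) (four_mul_le_heightGapDeriv hd hφ x θ hr))
    (heightGap_zero_right φ x θ) (fun r _ => two_mul_sq_le_heightGap hφ x θ r) _ f

theorem levelRadius_zero_left {τ : ℝ} (x θ : E) :
    levelRadius (0 : E → ℝ) x θ τ = √(τ / 2) := by
  have : {r : ℝ | 0 < r ∧ heightGap (0 : E → ℝ) x θ r < τ} = Ioo 0 √(τ / 2) := by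
    ext r
    refine and_congr_right fun hr => ?_
    rw [Real.lt_sqrt hr.le]
    simp only [heightGap, Pi.zero_apply]
    constructor <;> intro h <;> linarith
  rw [levelRadius, this, Real.volume_Ioo, sub_zero, ENNReal.toReal_ofReal (Real.sqrt_nonneg _)]

theorem heightGapDeriv_zero_left (x θ : E) (r : ℝ) : heightGapDeriv (0 : E → ℝ) x θ r = 4 * r := by
  simp [heightGapDeriv]

theorem levelRadius_pos_and_le_sqrt {φ : E → ℝ} (hd : Differentiable ℝ φ)
    (hφ : ConvexOn ℝ univ φ) (x θ : E) {τ : ℝ} (hτ : 0 < τ) :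
    0 < levelRadius φ x θ τ ∧ levelRadius φ x θ τ ≤ √(τ / 2) := by
  have hsub : {r : ℝ | 0 < r ∧ heightGap φ x θ r < τ} ⊆ Ioo 0 √(τ / 2) := by
    rintro r ⟨hr, h⟩
    refine ⟨hr, (Real.lt_sqrt hr.le).2 ?_⟩
    have := two_mul_sq_le_heightGap hφ x θ r
    linarith
  have hvol : volume (Ioo 0 √(τ / 2)) = ENNReal.ofReal √(τ / 2) := by simp
  have hfin : volume {r : ℝ | 0 < r ∧ heightGap φ x θ r < τ} ≠ ∞ :=
    ne_top_of_le_ne_top (by simp) (measure_mono hsub)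
  constructor
  · refine ENNReal.toReal_pos (ne_of_gt ?_) hfin
    have hc : ContinuousAt (heightGap φ x θ) 0 := (hasDerivAt_heightGap hd x θ 0).continuousAt
    have hev : ∀ᶠ r in nhds 0, heightGap φ x θ r < τ :=
      hc.eventually_lt continuousAt_const (by rwa [heightGap_zero_right])
    obtain ⟨ε, hε, hball⟩ := Metric.eventually_nhds_iff.1 hev
    refine lt_of_lt_of_le ?_ (measure_mono (s := Ioo 0 ε) fun r hr => ⟨hr.1, hball ?_⟩)
    · simpa using hε
    · rw [Real.dist_eq, sub_zero, abs_of_pos hr.1]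
      exact hr.2
  · refine ENNReal.toReal_le_of_le_ofReal (Real.sqrt_nonneg _) ?_
    rw [← hvol]
    exact measure_mono hsub

theorem rayDensity_lt {φ : E → ℝ} (hdim : 2 ≤ Module.finrank ℝ E) (hd : Differentiable ℝ φ)
    (hφ : StrictConvexOn ℝ univ φ) (x y : E) {θ η : E} (hθ : θ ≠ 0) {τ : ℝ} (hτ : 0 < τ) :
    rayDensity φ x θ τ < rayDensity 0 y η τ := by
  obtain ⟨hr, hle⟩ := levelRadius_pos_and_le_sqrt hd hφ.convexOn x θ hτ
  have hD := four_mul_lt_heightGapDeriv hd hφ x hθ hr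
  simp only [rayDensity, levelRadius_zero_left, heightGapDeriv_zero_left]
  generalize levelRadius φ x θ τ = r at *
  have hs : 0 < √(τ / 2) := Real.sqrt_pos.2 (by positivity)
  generalize √(τ / 2) = s at *
  obtain ⟨n, hn⟩ := Nat.exists_eq_add_of_le hdim
  have hn' : Module.finrank ℝ E - 1 = n + 1 := by omega
  rw [hn', ENNReal.ofReal_lt_ofReal_iff (by positivity)]
  calc r ^ (n + 1) / heightGapDeriv φ x θ r < r ^ (n + 1) / (4 * r) := by gcongr
    _ = r ^ n / 4 := by field_simp; ring
    _ ≤ s ^ n / 4 := by gcongr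
    _ = s ^ (n + 1) / (4 * s) := by field_simp; ring

theorem continuous_heightGapDeriv {φ : E → ℝ} (hφ : ContDiff ℝ 1 φ) :
    Continuous fun p : E × E × ℝ => heightGapDeriv φ p.1 p.2.1 p.2.2 := by
  have hc : Continuous (fderiv ℝ φ) := hφ.continuous_fderiv one_ne_zero
  unfold heightGapDeriv
  exact (by fun_prop : Continuous fun p : E × E × ℝ => 4 * p.2.2).add
    (((hc.comp (by fun_prop)).clm_apply (by fun_prop)).sub
      ((hc.comp (by fun_prop)).clm_apply (by fun_prop)))

variable [FiniteDimensional ℝ E] [MeasurableSpace E] [BorelSpace E]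

theorem measurable_levelRadius {φ : E → ℝ} (hφ : Continuous φ) :
    Measurable fun p : E × E × ℝ => levelRadius φ p.1 p.2.1 p.2.2 := by
  have hs : MeasurableSet {q : (E × E × ℝ) × ℝ |
      0 < q.2 ∧ heightGap φ q.1.1 q.1.2.1 q.2 < q.1.2.2} := by
    have hm : Measurable fun q : (E × E × ℝ) × ℝ => heightGap φ q.1.1 q.1.2.1 q.2 := by
      unfold heightGap
      exact Continuous.measurable (by fun_prop)
    exact (measurableSet_lt measurable_const measurable_snd).inter
      (measurableSet_lt hm measurable_fst.snd.snd)
  exact (measurable_measure_prodMk_left (ν := volume) hs).ennreal_toReal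

theorem measurable_rayDensity {α : Type*} [MeasurableSpace α] {φ : E → ℝ} (hφ : ContDiff ℝ 1 φ)
    {x θ : α → E} {τ : α → ℝ} (hx : Measurable x) (hθ : Measurable θ) (hτ : Measurable τ) :
    Measurable fun a => rayDensity φ (x a) (θ a) (τ a) := by
  have hr := (measurable_levelRadius hφ.continuous).comp (hx.prodMk (hθ.prodMk hτ))
  have hD := (continuous_heightGapDeriv hφ).measurable.comp (hx.prodMk (hθ.prodMk hr))
  unfold rayDensity
  exact ENNReal.measurable_ofReal.comp (Measurable.div (hr.pow_const _) hD)

/-- Integration in polar coordinates. -/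
theorem lintegral_eq_lintegral_toSphere (μ : Measure E) [μ.IsAddHaarMeasure] [Nontrivial E]
    {f : E → ℝ≥0∞} (hf : Measurable f) :
    ∫⁻ ω, f ω ∂μ = ∫⁻ θ : sphere (0 : E) 1, (∫⁻ r in Ioi (0 : ℝ),
      ENNReal.ofReal (r ^ (Module.finrank ℝ E - 1)) * f (r • (θ : E))) ∂μ.toSphere := by
  have hg : Measurable fun p : sphere (0 : E) 1 × Ioi (0 : ℝ) => f ((p.2 : ℝ) • (p.1 : E)) :=
    hf.comp (by fun_prop)
  calc ∫⁻ ω, f ω ∂μ = ∫⁻ ω : ({0}ᶜ : Set E), f ω ∂(μ.comap (↑)) := by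
        rw [lintegral_subtype_comap (measurableSet_singleton _).compl, restrict_compl_singleton]
    _ = ∫⁻ ω : ({0}ᶜ : Set E), f (((homeomorphUnitSphereProd E ω).2 : ℝ) •
          ((homeomorphUnitSphereProd E ω).1 : E)) ∂(μ.comap (↑)) := by
        refine lintegral_congr fun ω => ?_
        have hω : ‖(ω : E)‖ ≠ 0 := norm_ne_zero_iff.2 ω.2
        simp [smul_smul, mul_inv_cancel₀ hω]
    _ = ∫⁻ p, f ((p.2 : ℝ) • (p.1 : E))
          ∂μ.toSphere.prod (Measure.volumeIoiPow (Module.finrank ℝ E - 1)) :=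
        μ.measurePreserving_homeomorphUnitSphereProd.lintegral_comp hg
    _ = _ := by
        rw [lintegral_prod _ hg.aemeasurable]
        refine lintegral_congr fun θ => ?_
        have hθ : Measurable fun r : Ioi (0 : ℝ) => f ((r : ℝ) • (θ : E)) :=
          hg.comp measurable_prodMk_left
        rw [Measure.volumeIoiPow, lintegral_withDensity_eq_lintegral_mul _ (by fun_prop) hθ]
        exact lintegral_subtype_comap measurableSet_Ioi
          fun r : ℝ => ENNReal.ofReal (r ^ (Module.finrank ℝ E - 1)) * f (r • (θ : E))

/-- The density at height `2 * ψ x + τ` over `2 • x` of the convolution square of the measure on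
the graph of `ψ = ‖·‖ ^ 2 + φ`. -/
def sphereDensity (μ : Measure E) (φ : E → ℝ) (x : E) (τ : ℝ) : ℝ≥0∞ :=
  ∫⁻ θ : sphere (0 : E) 1, rayDensity φ x θ τ ∂μ.toSphere

section

variable (μ : Measure E) [μ.IsAddHaarMeasure]

theorem measurable_sphereDensity {φ : E → ℝ} (hφ : ContDiff ℝ 1 φ) :
    Measurable fun p : E × ℝ => sphereDensity μ φ p.1 p.2 := by
  have h : Measurable fun q : (E × ℝ) × sphere (0 : E) 1 => rayDensity φ q.1.1 q.2 q.1.2 :=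
    measurable_rayDensity hφ (by fun_prop) (by fun_prop) (by fun_prop)
  exact h.lintegral_prod_right'

theorem sphereDensity_lt {φ : E → ℝ} (hdim : 2 ≤ Module.finrank ℝ E) (hφ : ContDiff ℝ 1 φ)
    (hconv : StrictConvexOn ℝ univ φ) (x y : E) {τ : ℝ} (hτ : 0 < τ) :
    sphereDensity μ φ x τ < sphereDensity μ 0 y τ := by
  have : Nontrivial E := Module.nontrivial_of_finrank_pos (R := ℝ) (by omega)
  have hlt : ∀ θ : sphere (0 : E) 1, rayDensity φ x θ τ < rayDensity 0 y (θ : E) τ := fun θ =>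
    rayDensity_lt hdim (hφ.differentiable one_ne_zero) hconv x y
      (ne_of_mem_sphere θ.2 one_ne_zero) hτ
  have hconst : ∀ θ : E, rayDensity 0 y θ τ = rayDensity 0 y 0 τ := fun θ => by
    simp only [rayDensity, levelRadius_zero_left, heightGapDeriv_zero_left]
  have hfin : sphereDensity μ 0 y τ ≠ ∞ := by
    simp only [sphereDensity, hconst, lintegral_const]
    exact ENNReal.mul_ne_top ENNReal.ofReal_ne_top (measure_ne_top _ _)
  refine lintegral_strict_mono μ.toSphere_ne_zero ?_ ?_ (ae_of_all _ hlt)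
  · simp only [hconst]
    exact aemeasurable_const
  · exact ne_top_of_le_ne_top hfin (lintegral_mono fun θ => (hlt θ).le)

theorem lintegral_comp_add_graph_eq [Nontrivial E] {φ : E → ℝ} (hφ : ContDiff ℝ 1 φ)
    (hconv : ConvexOn ℝ univ φ) (x : E) {f : ℝ → ℝ≥0∞} (hf : Measurable f) :
    ∫⁻ ω, f ((‖x + ω‖ ^ 2 + φ (x + ω)) + (‖x - ω‖ ^ 2 + φ (x - ω))) ∂μ =
      ∫⁻ t, (Ioi 0).indicator (sphereDensity μ φ x) (t - 2 * (‖x‖ ^ 2 + φ x)) * f t := by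
  have hφc := hφ.continuous
  have hgap : ∀ (θ : sphere (0 : E) 1) (r : ℝ),
      (‖x + r • (θ : E)‖ ^ 2 + φ (x + r • (θ : E))) +
        (‖x - r • (θ : E)‖ ^ 2 + φ (x - r • (θ : E))) =
      heightGap φ x θ r + 2 * (‖x‖ ^ 2 + φ x) := by
    intro θ r
    have h := parallelogram_law_with_norm ℝ x (r • (θ : E))
    rw [norm_smul, norm_eq_of_mem_sphere, mul_one, Real.norm_eq_abs, sq_abs] at h
    unfold heightGap
    linarith
  have hm : Measurable fun q : sphere (0 : E) 1 × ℝ =>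
      rayDensity φ x q.1 q.2 * f (q.2 + 2 * (‖x‖ ^ 2 + φ x)) :=
    (measurable_rayDensity hφ (by fun_prop) (by fun_prop) (by fun_prop)).mul
      (hf.comp (by fun_prop))
  rw [lintegral_eq_lintegral_toSphere μ (by fun_prop)]
  simp only [hgap]
  simp only [lintegral_Ioi_heightGap (hφ.differentiable one_ne_zero) hconv x _
    fun τ => f (τ + 2 * (‖x‖ ^ 2 + φ x))]
  rw [lintegral_lintegral_swap hm.aemeasurable, ← lintegral_indicator measurableSet_Ioi]
  conv_rhs => rw [← lintegral_add_right_eq_self _ (2 * (‖x‖ ^ 2 + φ x))]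
  refine lintegral_congr fun τ => ?_
  rw [add_sub_cancel_right]
  by_cases hτ : τ ∈ Ioi (0 : ℝ)
  · rw [indicator_of_mem hτ, indicator_of_mem hτ, sphereDensity, lintegral_mul_const]
    exact measurable_rayDensity hφ (by fun_prop) (by fun_prop) (by fun_prop)
  · rw [indicator_of_notMem hτ, indicator_of_notMem hτ, zero_mul]

/-- The density of the convolution square of the measure on the graph of `ψ = ‖·‖ ^ 2 + φ`. -/
def graphConvDensity (φ : E → ℝ) (p : E × ℝ) : ℝ≥0∞ :=
  (Ioi 0).indicator (sphereDensity μ φ ((2 : ℝ)⁻¹ • p.1))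
    (p.2 - 2 * (‖(2 : ℝ)⁻¹ • p.1‖ ^ 2 + φ ((2 : ℝ)⁻¹ • p.1)))

theorem measurable_graphConvDensity {φ : E → ℝ} (hφ : ContDiff ℝ 1 φ) :
    Measurable (graphConvDensity μ φ) := by
  have hφc := hφ.continuous
  have h₁ : Measurable fun p : E × ℝ =>
      p.2 - 2 * (‖(2 : ℝ)⁻¹ • p.1‖ ^ 2 + φ ((2 : ℝ)⁻¹ • p.1)) :=
    Continuous.measurable (by fun_prop)
  have h₂ := (measurable_sphereDensity μ hφ).comp
    ((by fun_prop : Measurable fun p : E × ℝ => (2 : ℝ)⁻¹ • p.1).prodMk h₁)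
  exact h₂.indicator (h₁ measurableSet_Ioi)

theorem lintegral_lintegral_add_eq_midpoint {F : E → E → ℝ≥0∞}
    (hF : Measurable (Function.uncurry F)) :
    ∫⁻ y, ∫⁻ z, F y z ∂μ ∂μ =
      ∫⁻ ξ, ∫⁻ ω, F ((2 : ℝ)⁻¹ • ξ + ω) ((2 : ℝ)⁻¹ • ξ - ω) ∂μ ∂μ := by
  have hm : Measurable (Function.uncurry fun y ξ => F y (ξ - y)) :=
    hF.comp (by fun_prop : Measurable fun p : E × E => (p.1, p.2 - p.1))
  calc ∫⁻ y, ∫⁻ z, F y z ∂μ ∂μ = ∫⁻ y, ∫⁻ ξ, F y (ξ - y) ∂μ ∂μ :=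
        lintegral_congr fun y => (lintegral_sub_right_eq_self (fun z => F y z) y).symm
    _ = ∫⁻ ξ, ∫⁻ y, F y (ξ - y) ∂μ ∂μ := lintegral_lintegral_swap hm.aemeasurable
    _ = _ := by
        refine lintegral_congr fun ξ => ?_
        rw [← lintegral_add_left_eq_self _ ((2 : ℝ)⁻¹ • ξ)]
        refine lintegral_congr fun ω => ?_
        congr 1
        module

theorem map_add_graph_prod_eq_withDensity [Nontrivial E] {φ : E → ℝ} (hφ : ContDiff ℝ 1 φ)
    (hconv : ConvexOn ℝ univ φ) :
    Measure.map (fun p : (E × ℝ) × (E × ℝ) => p.1 + p.2)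
        ((Measure.map (fun y => (y, ‖y‖ ^ 2 + φ y)) μ).prod
          (Measure.map (fun y => (y, ‖y‖ ^ 2 + φ y)) μ)) =
      (μ.prod volume).withDensity (graphConvDensity μ φ) := by
  have hφc := hφ.continuous
  have hg : Measurable fun y : E => (y, ‖y‖ ^ 2 + φ y) := Continuous.measurable (by fun_prop)
  refine Measure.ext_of_lintegral _ fun f hf => ?_
  have hF : Measurable (Function.uncurry fun y z : E =>
      f (y + z, (‖y‖ ^ 2 + φ y) + (‖z‖ ^ 2 + φ z))) :=
    hf.comp (Continuous.measurable (by fun_prop))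
  have hK := measurable_graphConvDensity μ hφ
  rw [Measure.map_prod_map _ _ hg hg, lintegral_map hf (by fun_prop),
    lintegral_map (by fun_prop) (by fun_prop), lintegral_prod _ (by fun_prop),
    lintegral_withDensity_eq_lintegral_mul _ hK hf, lintegral_prod _ (hK.mul hf).aemeasurable]
  refine (lintegral_lintegral_add_eq_midpoint μ hF).trans (lintegral_congr fun ξ => ?_)
  have hξ : ∀ ω : E, ((2 : ℝ)⁻¹ • ξ + ω) + ((2 : ℝ)⁻¹ • ξ - ω) = ξ := fun ω => by module
  simp only [hξ]
  exact lintegral_comp_add_graph_eq μ hφ hconv _ (hf.comp measurable_prodMk_left)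

omit [BorelSpace E] in
/-- Vertical translation of the fibres of `E × ℝ` preserves the product measure. -/
theorem measurePreserving_add_snd {h : E → ℝ} (hh : Measurable h) :
    MeasurePreserving (fun p : E × ℝ => (p.1, h p.1 + p.2)) (μ.prod volume) (μ.prod volume) :=
  (MeasurePreserving.id μ).skew_product (by fun_prop)
    (ae_of_all _ fun x => map_add_left_eq_self volume (h x))

theorem rnDeriv_map_add_graph_prod [Nontrivial E] {φ : E → ℝ} (hφ : ContDiff ℝ 1 φ)
    (hconv : ConvexOn ℝ univ φ) :
    ∀ᵐ p : E × ℝ ∂μ.prod volume, 0 < p.2 →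
      (Measure.map (fun p : (E × ℝ) × (E × ℝ) => p.1 + p.2)
        ((Measure.map (fun y => (y, ‖y‖ ^ 2 + φ y)) μ).prod
          (Measure.map (fun y => (y, ‖y‖ ^ 2 + φ y)) μ))).rnDeriv (μ.prod volume)
        (p.1, 2 * (‖(2 : ℝ)⁻¹ • p.1‖ ^ 2 + φ ((2 : ℝ)⁻¹ • p.1)) + p.2) =
      sphereDensity μ φ ((2 : ℝ)⁻¹ • p.1) p.2 := by
  have hφc := hφ.continuous
  rw [map_add_graph_prod_eq_withDensity μ hφ hconv]
  have h := Measure.rnDeriv_withDensity (μ.prod volume) (measurable_graphConvDensity μ hφ)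
  have hS := measurePreserving_add_snd μ (h := fun ξ =>
    2 * (‖(2 : ℝ)⁻¹ • ξ‖ ^ 2 + φ ((2 : ℝ)⁻¹ • ξ))) (Continuous.measurable (by fun_prop))
  filter_upwards [hS.quasiMeasurePreserving.ae h] with p hp hτ
  rw [hp, graphConvDensity]
  simp only [add_sub_cancel_left]
  exact indicator_of_mem (s := Ioi 0) hτ _

end

theorem statement3 (d : ℕ) (hd : 2 ≤ d)
    (φ : EuclideanSpace ℝ (Fin d) → ℝ) (hφ0 : ∀ y, 0 ≤ φ y)
    (hφC1 : ContDiff ℝ 1 φ) (hφconv : StrictConvexOn ℝ Set.univ φ)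
    (ψ : EuclideanSpace ℝ (Fin d) → ℝ) (hψ : ψ = fun y => ‖y‖ ^ 2 + φ y)
    (σ σ₀ : Measure (EuclideanSpace ℝ (Fin d) × ℝ))
    (hσ : σ = Measure.map (fun y => (y, ψ y)) volume)
    (hσ₀ : σ₀ = Measure.map (fun y : EuclideanSpace ℝ (Fin d) => (y, ‖y‖ ^ 2)) volume) :
    Measure.map (fun p : (EuclideanSpace ℝ (Fin d) × ℝ) × (EuclideanSpace ℝ (Fin d) × ℝ) =>
        p.1 + p.2) (σ.prod σ) ≪ volume ∧
    Measure.map (fun p : (EuclideanSpace ℝ (Fin d) × ℝ) × (EuclideanSpace ℝ (Fin d) × ℝ) =>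
        p.1 + p.2) (σ₀.prod σ₀) ≪ volume ∧
    ∀ᵐ p : EuclideanSpace ℝ (Fin d) × ℝ ∂volume, 0 < p.2 →
      (Measure.map (fun p : (EuclideanSpace ℝ (Fin d) × ℝ) × (EuclideanSpace ℝ (Fin d) × ℝ) =>
          p.1 + p.2) (σ.prod σ)).rnDeriv volume (p.1, 2 * ψ ((2:ℝ)⁻¹ • p.1) + p.2) <
      (Measure.map (fun p : (EuclideanSpace ℝ (Fin d) × ℝ) × (EuclideanSpace ℝ (Fin d) × ℝ) =>
          p.1 + p.2) (σ₀.prod σ₀)).rnDeriv volume (p.1, ‖p.1‖ ^ 2 / 2 + p.2) := by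
  have hdim : 2 ≤ Module.finrank ℝ (EuclideanSpace ℝ (Fin d)) := by simpa using hd
  have : Nontrivial (EuclideanSpace ℝ (Fin d)) :=
    Module.nontrivial_of_finrank_pos (R := ℝ) (by omega)
  have hzero : ContDiff ℝ 1 (0 : EuclideanSpace ℝ (Fin d) → ℝ) := contDiff_const
  have hzconv : ConvexOn ℝ univ (0 : EuclideanSpace ℝ (Fin d) → ℝ) :=
    convexOn_const 0 convex_univ
  have hσ₀' : σ₀ = Measure.map (fun y : EuclideanSpace ℝ (Fin d) =>
      (y, ‖y‖ ^ 2 + (0 : EuclideanSpace ℝ (Fin d) → ℝ) y)) volume := by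
    simpa using hσ₀
  have hhalf : ∀ ξ : EuclideanSpace ℝ (Fin d), 2 * (‖(2 : ℝ)⁻¹ • ξ‖ ^ 2 +
      (0 : EuclideanSpace ℝ (Fin d) → ℝ) ((2 : ℝ)⁻¹ • ξ)) = ‖ξ‖ ^ 2 / 2 := by
    intro ξ
    rw [norm_smul, Pi.zero_apply, add_zero, norm_inv, Real.norm_ofNat]
    ring
  subst hψ hσ hσ₀'
  refine ⟨?_, ?_, ?_⟩
  · rw [map_add_graph_prod_eq_withDensity volume hφC1 hφconv.convexOn]
    exact withDensity_absolutelyContinuous _ _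
  · rw [map_add_graph_prod_eq_withDensity volume hzero hzconv]
    exact withDensity_absolutelyContinuous _ _
  · have h := rnDeriv_map_add_graph_prod volume hφC1 hφconv.convexOn
    have h₀ := rnDeriv_map_add_graph_prod volume hzero hzconv
    simp only [hhalf] at h₀
    filter_upwards [h, h₀] with p hp hp₀ hτ
    exact (hp hτ).trans_lt ((sphereDensity_lt volume hdim hφC1 hφconv _ _ hτ).trans_eq
      (hp₀ hτ).symm)
end
end

section
/- Let p ≥ 2, let w(y) = |y|^{(p−2)/2} for y ∈ ℝ², and let wν_p denote the pushforward under y ↦ (y, |y|^p) of the measure on ℝ² with density w with respect to Lebesgue measure. Then: (a) the convolution wν_p ∗ wν_p is absolutely continuous with respect to Lebesgue measure on ℝ³ and its Radon–Nikodym derivative is essentially bounded; (b) the topological support of wν_p ∗ wν_p equals E_p = {(ξ, τ) ∈ ℝ² × ℝ : τ ≥ 2^{1−p}|ξ|^p}; and (c) if p > 2, there exists a function F : ℝ³ → ℝ, equal Lebesgue-almost everywhere to the Radon–Nikodym derivative of wν_p ∗ wν_p, which is continuous on E_p \ {(0,0)}, satisfies F(ξ, 2^{1−p}|ξ|^p)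 = π/(p√(p−1)) for every ξ ≠ 0, F(0, τ) = π/p for every τ > 0, and F(ξ, τ) < π/p for every (ξ, τ) ∈ E_p with ξ ≠ 0; in particular, for p > 2 the essential supremum of the Radon–Nikodym derivative of wν_p ∗ wν_p equals π/p and is attained only on the Lebesgue-null set {(0, τ) : τ > 0}. -/
open MeasureTheory Filter
open scoped ENNReal

noncomputable section

abbrev R2 : Type := EuclideanSpace ℝ (Fin 2)
abbrev R3 : Type := R2 × ℝ

/-- Pushforward under `y ↦ (y, Ψ y)` of the measure with density `g`
with respect to Lebesgue measure on `ℝ²`. -/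
def wProj (Ψ : R2 → ℝ) (g : R2 → ℝ) : Measure R3 :=
  Measure.map (fun y => (y, Ψ y)) (volume.withDensity fun y => ENNReal.ofReal (g y))

/-- Convolution of Borel measures on `ℝ³`. -/
def mconv (μ ν : Measure R3) : Measure R3 :=
  Measure.map (fun p : R3 × R3 => p.1 + p.2) (μ.prod ν)

/-- Topological support of a measure on `ℝ³`. -/
def msupport (μ : Measure R3) : Set R3 :=
  {x | ∀ U : Set R3, IsOpen U → x ∈ U → μ U ≠ 0}


/-- The exponent-`p` energy `‖η + u‖ ^ p + ‖η - u‖ ^ p` in terms of `m = ‖η‖ ^ 2`,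
`c = ⟪η, u⟫ / ‖u‖` and `r = ‖u‖`. -/
def pairEnergy (p m c r : ℝ) : ℝ :=
  (m + 2 * c * r + r ^ 2) ^ (p / 2) + (m - 2 * c * r + r ^ 2) ^ (p / 2)

/-- The divided difference of `x ↦ x ^ ((p - 2) / 2)`. -/
def powSlope (p x y : ℝ) : ℝ :=
  if x = y then (p - 2) / 2 * x ^ ((p - 2) / 2 - 1)
  else (x ^ ((p - 2) / 2) - y ^ ((p - 2) / 2)) / (x - y)

/-- The denominator of `fiberDensity`, up to the factor `p`. -/
def fiberDenom (p m c r : ℝ) : ℝ :=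
  4 * c ^ 2 * powSlope p (m + 2 * c * r + r ^ 2) (m - 2 * c * r + r ^ 2) +
    ((m + 2 * c * r + r ^ 2) ^ ((p - 2) / 2) + (m - 2 * c * r + r ^ 2) ^ ((p - 2) / 2))

/-- The density of the pushforward under `pairEnergy p m c` of the weighted radial measure,
as a function of the radius. -/
def fiberDensity (p m c r : ℝ) : ℝ :=
  (m + 2 * c * r + r ^ 2) ^ ((p - 2) / 4) * (m - 2 * c * r + r ^ 2) ^ ((p - 2) / 4) /
    (p * fiberDenom p m c r)

/-- The radius at which `pairEnergy p m c` takes the value `τ`. -/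
def energyRadius (p m c τ : ℝ) : ℝ :=
  Function.invFunOn (pairEnergy p m c) (Set.Ici 0) (max τ (2 * m ^ (p / 2)))

lemma powSlope_mul_sub (p x y : ℝ) :
    powSlope p x y * (x - y) = x ^ ((p - 2) / 2) - y ^ ((p - 2) / 2) := by
  unfold powSlope
  split_ifs with h
  · simp [h]
  · field_simp [sub_ne_zero.2 h]

lemma powSlope_nonneg {p x y : ℝ} (hp : 2 ≤ p) (hx : 0 ≤ x) (hy : 0 ≤ y) :
    0 ≤ powSlope p x y := by
  unfold powSlope
  have hp' : 0 ≤ (p - 2) / 2 := by linarith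
  split_ifs with h
  · positivity
  · rcases le_total x y with h' | h'
    · have := Real.rpow_le_rpow hx h' hp'
      exact div_nonneg_of_nonpos (by linarith) (by linarith)
    · have := Real.rpow_le_rpow hy h' hp'
      exact div_nonneg (by linarith) (by linarith)

lemma powSlope_pos {p x y : ℝ} (hp : 2 < p) (hx : 0 ≤ x) (hy : 0 ≤ y) (hxy : 0 < x + y) :
    0 < powSlope p x y := by
  unfold powSlope
  have hp' : 0 < (p - 2) / 2 := by linarith
  split_ifs with h
  · have : 0 < x := by linarith
    positivity
  · rcases lt_or_gt_of_ne h with h' | h'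
    · have := Real.rpow_lt_rpow hx h' hp'
      exact div_pos_of_neg_of_neg (by linarith) (by linarith)
    · have := Real.rpow_lt_rpow hy h' hp'
      exact div_pos (by linarith) (by linarith)

lemma continuousAt_powSlope {p x y : ℝ} (hp : 2 ≤ p) (hxy : 0 < x + y) :
    ContinuousAt (fun z : ℝ × ℝ => powSlope p z.1 z.2) (x, y) := by
  have hp' : 0 ≤ (p - 2) / 2 := by linarith
  by_cases h : x = y
  · subst h
    have hx0 : 0 < x := by linarith
    have hs : HasStrictDerivAt (fun t : ℝ => t ^ ((p - 2) / 2))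
        ((p - 2) / 2 * x ^ ((p - 2) / 2 - 1)) x :=
      Real.hasStrictDerivAt_rpow_const (Or.inl hx0.ne')
    have ho := hs.isLittleO
    have hd : ContinuousAt (fun z : ℝ × ℝ => (p - 2) / 2 * z.1 ^ ((p - 2) / 2 - 1)) (x, x) :=
      (continuousAt_fst.rpow_const (Or.inl hx0.ne')).const_mul _
    rw [Metric.continuousAt_iff'] at hd ⊢
    intro ε hε
    have h1 := ho.def (half_pos hε)
    filter_upwards [h1, hd ε hε] with z hz1 hz2
    unfold powSlope
    rw [if_pos rfl]
    split_ifs with hz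
    · exact hz2
    · have hne : 0 < |z.1 - z.2| := abs_pos.2 (sub_ne_zero.2 hz)
      rw [Real.dist_eq]
      have : (z.1 ^ ((p - 2) / 2) - z.2 ^ ((p - 2) / 2)) / (z.1 - z.2) -
          (p - 2) / 2 * x ^ ((p - 2) / 2 - 1) =
          (z.1 ^ ((p - 2) / 2) - z.2 ^ ((p - 2) / 2) -
            (z.1 - z.2) * ((p - 2) / 2 * x ^ ((p - 2) / 2 - 1))) / (z.1 - z.2) := by
        field_simp [sub_ne_zero.2 hz]
      rw [this, abs_div, div_lt_iff₀ hne]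
      simp only [Real.norm_eq_abs, ContinuousLinearMap.toSpanSingleton_apply, smul_eq_mul] at hz1
      nlinarith
  · have hev : ∀ᶠ z : ℝ × ℝ in nhds (x, y), powSlope p z.1 z.2 =
        (z.1 ^ ((p - 2) / 2) - z.2 ^ ((p - 2) / 2)) / (z.1 - z.2) := by
      filter_upwards [(isOpen_ne_fun continuous_fst continuous_snd).mem_nhds h] with z hz
      exact if_neg hz
    refine ContinuousAt.congr_of_eventuallyEq ?_ hev
    exact ((continuousAt_fst.rpow_const (Or.inr hp')).sub
      (continuousAt_snd.rpow_const (Or.inr hp'))).div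
      (continuousAt_fst.sub continuousAt_snd) (sub_ne_zero.2 h)

lemma measurable_powSlope (p : ℝ) : Measurable fun z : ℝ × ℝ => powSlope p z.1 z.2 := by
  unfold powSlope
  refine Measurable.ite (measurableSet_eq_fun measurable_fst measurable_snd) ?_ ?_ <;> fun_prop

section
variable {p m c r : ℝ}

lemma radicand_add_nonneg (hcm : c ^ 2 ≤ m) : 0 ≤ m + 2 * c * r + r ^ 2 := by
  nlinarith [sq_nonneg (c + r)]

lemma radicand_sub_nonneg (hcm : c ^ 2 ≤ m) : 0 ≤ m - 2 * c * r + r ^ 2 := by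
  nlinarith [sq_nonneg (c - r)]

lemma fiberDenom_bounds (hp : 2 ≤ p) (hcm : c ^ 2 ≤ m) (hmr : 0 < m + r ^ 2) :
    0 < fiberDenom p m c r ∧
    2 * ((m + 2 * c * r + r ^ 2) ^ ((p - 2) / 4) * (m - 2 * c * r + r ^ 2) ^ ((p - 2) / 4)) ≤
      fiberDenom p m c r ∧ (2 < p → c ≠ 0 →
    2 * ((m + 2 * c * r + r ^ 2) ^ ((p - 2) / 4) * (m - 2 * c * r + r ^ 2) ^ ((p - 2) / 4)) <
      fiberDenom p m c r) := by
  unfold fiberDenom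
  have hx := radicand_add_nonneg (r := r) hcm
  have hy := radicand_sub_nonneg (r := r) hcm
  have hxy : 0 < (m + 2 * c * r + r ^ 2) + (m - 2 * c * r + r ^ 2) := by linarith
  generalize m + 2 * c * r + r ^ 2 = x at *
  generalize m - 2 * c * r + r ^ 2 = y at *
  have hS := powSlope_nonneg hp hx hy
  have hS' := fun h : 2 < p => powSlope_pos h hx hy hxy
  have ex : x ^ ((p - 2) / 2) = (x ^ ((p - 2) / 4)) ^ 2 := by
    rw [← Real.rpow_mul_natCast hx]; congr 1; push_cast; ring
  have ey : y ^ ((p - 2) / 2) = (y ^ ((p - 2) / 4)) ^ 2 := by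
    rw [← Real.rpow_mul_natCast hy]; congr 1; push_cast; ring
  have hsq := sq_nonneg (x ^ ((p - 2) / 4) - y ^ ((p - 2) / 4))
  have hc : 0 ≤ 4 * c ^ 2 * powSlope p x y := by positivity
  refine ⟨?_, ?_, fun h h' => ?_⟩
  · have hx' : 0 ≤ x ^ ((p - 2) / 2) := by positivity
    have hy' : 0 ≤ y ^ ((p - 2) / 2) := by positivity
    rcases hx.eq_or_lt with h | h
    · have : 0 < y := by linarith
      have : 0 < y ^ ((p - 2) / 2) := by positivity
      linarith
    · have : 0 < x ^ ((p - 2) / 2) := by positivity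
      linarith
  · rw [ex, ey]; nlinarith
  · have := hS' h
    have : 0 < 4 * c ^ 2 * powSlope p x y := by positivity
    rw [ex, ey]; nlinarith

lemma fiberDensity_nonneg (hp : 2 ≤ p) (hcm : c ^ 2 ≤ m) (hmr : 0 < m + r ^ 2) :
    0 ≤ fiberDensity p m c r := by
  have hx := radicand_add_nonneg (r := r) hcm
  have hy := radicand_sub_nonneg (r := r) hcm
  have := (fiberDenom_bounds hp hcm hmr).1
  unfold fiberDensity
  positivity

lemma fiberDensity_le (hp : 2 ≤ p) (hcm : c ^ 2 ≤ m) (hmr : 0 < m + r ^ 2) :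
    fiberDensity p m c r ≤ 1 / (2 * p) := by
  obtain ⟨h1, h2, -⟩ := fiberDenom_bounds hp hcm hmr
  unfold fiberDensity
  rw [div_le_div_iff₀ (by positivity) (by positivity)]
  nlinarith

lemma fiberDensity_lt (hp : 2 < p) (hcm : c ^ 2 ≤ m) (hmr : 0 < m + r ^ 2) (hc : c ≠ 0) :
    fiberDensity p m c r < 1 / (2 * p) := by
  obtain ⟨h1, -, h2⟩ := fiberDenom_bounds hp.le hcm hmr
  have := h2 hp hc
  unfold fiberDensity
  rw [div_lt_div_iff₀ (by positivity) (by positivity)]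
  nlinarith

lemma fiberDensity_zero_zero (hp : 2 ≤ p) (hr : 0 < r) : fiberDensity p 0 0 r = 1 / (2 * p) := by
  have : 0 < r ^ 2 := by positivity
  unfold fiberDensity fiberDenom
  simp only [mul_zero, zero_mul, add_zero, zero_add, sub_zero, zero_pow two_ne_zero]
  rw [← Real.rpow_add this, show (p - 2) / 4 + (p - 2) / 4 = (p - 2) / 2 by ring]
  have : 0 < (r ^ 2) ^ ((p - 2) / 2) := by positivity
  field_simp
  ring

lemma fiberDensity_radius_zero (hp : 2 ≤ p) (hm : 0 < m) :
    fiberDensity p m c 0 = 1 / (2 * p) * (1 / (1 + (p - 2) * (c ^ 2 / m))) := by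
  unfold fiberDensity fiberDenom powSlope
  simp only [mul_zero, add_zero, sub_zero, zero_pow two_ne_zero, if_true]
  rw [← Real.rpow_add hm, show (p - 2) / 4 + (p - 2) / 4 = (p - 2) / 2 by ring,
    Real.rpow_sub_one hm.ne']
  have : 0 < m ^ ((p - 2) / 2) := by positivity
  have h3 : 0 ≤ (p - 2) * c ^ 2 := mul_nonneg (by linarith) (by positivity)
  have h4 : 0 < m + (p - 2) * c ^ 2 := by positivity
  have h5 : 1 + (p - 2) * (c ^ 2 / m) = (m + (p - 2) * c ^ 2) / m := by field_simp
  have h6 : 4 * c ^ 2 * ((p - 2) / 2 * (m ^ ((p - 2) / 2) / m)) +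
      (m ^ ((p - 2) / 2) + m ^ ((p - 2) / 2)) =
      2 * m ^ ((p - 2) / 2) * ((m + (p - 2) * c ^ 2) / m) := by
    field_simp; ring
  rw [h5, h6]
  field_simp

lemma pairEnergy_zero (p m c : ℝ) : pairEnergy p m c 0 = 2 * m ^ (p / 2) := by
  unfold pairEnergy; simp; ring

lemma hasDerivAt_pairEnergy (hp : 2 ≤ p) (m c r : ℝ) :
    HasDerivAt (pairEnergy p m c) (p * r * fiberDenom p m c r) r := by
  have hp2 : (1 : ℝ) ≤ p / 2 := by linarith
  have h1 : HasDerivAt (fun r : ℝ => m + 2 * c * r + r ^ 2) (2 * c + 2 * r) r := by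
    have := (((hasDerivAt_id r).const_mul (2 * c)).const_add m).add (hasDerivAt_pow 2 r)
    exact this.congr_deriv (by norm_num)
  have h2 : HasDerivAt (fun r : ℝ => m - 2 * c * r + r ^ 2) (-2 * c + 2 * r) r := by
    have := (((hasDerivAt_id r).const_mul (2 * c)).const_sub m).add (hasDerivAt_pow 2 r)
    exact this.congr_deriv (by norm_num)
  have h := (h1.rpow_const (p := p / 2) (Or.inr hp2)).add
    (h2.rpow_const (p := p / 2) (Or.inr hp2))
  refine HasDerivAt.congr_deriv (f := pairEnergy p m c) h ?_
  unfold fiberDenom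
  have hS := powSlope_mul_sub p (m + 2 * c * r + r ^ 2) (m - 2 * c * r + r ^ 2)
  rw [show p / 2 - 1 = (p - 2) / 2 by ring]
  linear_combination (-(p * c)) * hS

lemma strictMonoOn_pairEnergy (hp : 2 ≤ p) (hcm : c ^ 2 ≤ m) :
    StrictMonoOn (pairEnergy p m c) (Set.Ici 0) := by
  refine strictMonoOn_of_deriv_pos (convex_Ici 0)
    (fun x _ => (hasDerivAt_pairEnergy hp m c x).continuousAt.continuousWithinAt) fun x hx => ?_
  rw [interior_Ici, Set.mem_Ioi] at hx
  rw [(hasDerivAt_pairEnergy hp m c x).deriv]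
  have := (fiberDenom_bounds (r := x) hp hcm (by nlinarith)).1
  positivity

lemma exists_pairEnergy_eq (hp : 2 ≤ p) (hcm : c ^ 2 ≤ m) {τ : ℝ} (hτ : 2 * m ^ (p / 2) ≤ τ) :
    ∃ r ∈ Set.Ici (0 : ℝ), pairEnergy p m c r = τ := by
  have hcont : ContinuousOn (pairEnergy p m c) (Set.Icc 0 (max 1 τ)) :=
    fun x _ => (hasDerivAt_pairEnergy hp m c x).continuousAt.continuousWithinAt
  have h1 : (1 : ℝ) ≤ max 1 τ := le_max_left _ _
  have key : τ ≤ pairEnergy p m c (max 1 τ) := by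
    refine (le_max_right 1 τ).trans ?_
    generalize max 1 τ = s at *
    have hx := radicand_add_nonneg (r := s) hcm
    have hy := radicand_sub_nonneg (r := s) hcm
    have hm : 0 ≤ m := (sq_nonneg c).trans hcm
    have aux : ∀ x, s ≤ x → s ≤ x ^ (p / 2) := fun x hx =>
      hx.trans (Real.self_le_rpow_of_one_le (h1.trans hx) (by linarith))
    have hx' := Real.rpow_nonneg hx (p / 2)
    have hy' := Real.rpow_nonneg hy (p / 2)
    unfold pairEnergy
    rcases le_total 0 c with h | h
    · have := aux (m + 2 * c * s + s ^ 2) (by nlinarith)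
      linarith
    · have := aux (m - 2 * c * s + s ^ 2) (by nlinarith)
      linarith
  obtain ⟨r, hr, h⟩ := intermediate_value_Icc (by linarith) hcont
    ⟨by rw [pairEnergy_zero]; exact hτ, key⟩
  exact ⟨r, hr.1, h⟩

lemma energyRadius_nonneg (hp : 2 ≤ p) (hcm : c ^ 2 ≤ m) (τ : ℝ) :
    0 ≤ energyRadius p m c τ :=
  Function.invFunOn_mem (exists_pairEnergy_eq hp hcm (le_max_right _ _))

lemma pairEnergy_energyRadius (hp : 2 ≤ p) (hcm : c ^ 2 ≤ m) (τ : ℝ) :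
    pairEnergy p m c (energyRadius p m c τ) = max τ (2 * m ^ (p / 2)) :=
  Function.invFunOn_eq (exists_pairEnergy_eq hp hcm (le_max_right _ _))

lemma le_pairEnergy (hp : 2 ≤ p) (hcm : c ^ 2 ≤ m) (hr : 0 ≤ r) :
    2 * m ^ (p / 2) ≤ pairEnergy p m c r := by
  rw [← pairEnergy_zero p m c]
  exact (strictMonoOn_pairEnergy hp hcm).monotoneOn Set.self_mem_Ici hr hr

lemma energyRadius_pairEnergy (hp : 2 ≤ p) (hcm : c ^ 2 ≤ m) (hr : 0 ≤ r) :
    energyRadius p m c (pairEnergy p m c r) = r := by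
  refine (strictMonoOn_pairEnergy hp hcm).injOn (energyRadius_nonneg hp hcm _) hr ?_
  rw [pairEnergy_energyRadius hp hcm, max_eq_left (le_pairEnergy hp hcm hr)]

lemma energyRadius_self (hp : 2 ≤ p) (hcm : c ^ 2 ≤ m) :
    energyRadius p m c (2 * m ^ (p / 2)) = 0 := by
  rw [← pairEnergy_zero p m c]
  exact energyRadius_pairEnergy hp hcm le_rfl

lemma image_pairEnergy (hp : 2 ≤ p) (hcm : c ^ 2 ≤ m) :
    pairEnergy p m c '' Set.Ioi 0 = Set.Ioi (2 * m ^ (p / 2)) := by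
  ext τ
  constructor
  · rintro ⟨r, hr, rfl⟩
    rw [Set.mem_Ioi, ← pairEnergy_zero p m c]
    exact strictMonoOn_pairEnergy hp hcm Set.self_mem_Ici (Set.Ioi_subset_Ici_self hr) hr
  · intro hτ
    obtain ⟨r, hr, h⟩ := exists_pairEnergy_eq hp hcm (le_of_lt hτ)
    refine ⟨r, Set.mem_Ioi.2 (lt_of_le_of_ne hr ?_), h⟩
    rintro rfl
    rw [pairEnergy_zero] at h
    exact hτ.ne h

lemma sq_energyRadius_add_pos (hp : 2 ≤ p) (hcm : c ^ 2 ≤ m) {τ : ℝ} (h : 0 < m ∨ 0 < τ) :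
    0 < m + energyRadius p m c τ ^ 2 := by
  have hm : 0 ≤ m := (sq_nonneg c).trans hcm
  rcases hm.eq_or_lt with h0 | h0
  · have hτ : 0 < τ := h.resolve_left h0.not_lt
    have hc : c = 0 := by nlinarith
    have hne : energyRadius p m c τ ≠ 0 := by
      intro h'
      have := pairEnergy_energyRadius hp hcm τ
      rw [h', pairEnergy_zero, ← h0, Real.zero_rpow (by linarith), mul_zero] at this
      exact absurd (le_max_left τ 0) (by rw [← this]; exact hτ.not_ge)
    positivity
  · positivity

end

lemma continuous_pairEnergy {p : ℝ} (hp : 2 ≤ p) (r : ℝ) :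
    Continuous fun z : ℝ × ℝ => pairEnergy p z.1 z.2 r := by
  have hp2 : (0 : ℝ) ≤ p / 2 := by linarith
  unfold pairEnergy
  exact ((by fun_prop : Continuous _).rpow_const fun _ => Or.inr hp2).add
    ((by fun_prop : Continuous _).rpow_const fun _ => Or.inr hp2)

lemma continuousOn_energyRadius {p : ℝ} (hp : 2 ≤ p) :
    ContinuousOn (fun z : ℝ × ℝ × ℝ => energyRadius p z.1 z.2.1 z.2.2)
      {z | z.2.1 ^ 2 ≤ z.1} := by
  have hE : ∀ s, Continuous fun z : ℝ × ℝ × ℝ => pairEnergy p z.1 z.2.1 s := fun s =>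
    (continuous_pairEnergy hp s).comp (continuous_fst.prodMk (continuous_fst.comp continuous_snd))
  have hM : Continuous fun z : ℝ × ℝ × ℝ => max z.2.2 (2 * z.1 ^ (p / 2)) := by
    have : Continuous fun z : ℝ × ℝ × ℝ => z.1 ^ (p / 2) :=
      continuous_fst.rpow_const fun _ => Or.inr (by linarith)
    fun_prop
  intro z hz
  refine tendsto_order.2 ⟨fun s hs => ?_, fun s hs => ?_⟩
  · rcases lt_or_ge s 0 with h0 | h0
    · filter_upwards [self_mem_nhdsWithin] with z' hz'
      exact h0.trans_le (energyRadius_nonneg hp hz' _)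
    · have h1 := (strictMonoOn_pairEnergy hp hz).lt_iff_lt h0 (energyRadius_nonneg hp hz _) |>.2 hs
      rw [pairEnergy_energyRadius hp hz] at h1
      filter_upwards [self_mem_nhdsWithin,
        mem_nhdsWithin_of_mem_nhds ((isOpen_lt (hE s) hM).mem_nhds h1)] with z' hz' h2
      refine (strictMonoOn_pairEnergy hp hz').lt_iff_lt h0 (energyRadius_nonneg hp hz' _) |>.1 ?_
      rw [pairEnergy_energyRadius hp hz']
      exact h2
  · have h0 : 0 ≤ s := (energyRadius_nonneg hp hz _).trans hs.le
    have h1 := (strictMonoOn_pairEnergy hp hz).lt_iff_lt (energyRadius_nonneg hp hz _) h0 |>.2 hs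
    rw [pairEnergy_energyRadius hp hz] at h1
    filter_upwards [self_mem_nhdsWithin,
      mem_nhdsWithin_of_mem_nhds ((isOpen_lt hM (hE s)).mem_nhds h1)] with z' hz' h2
    refine (strictMonoOn_pairEnergy hp hz').lt_iff_lt (energyRadius_nonneg hp hz' _) h0 |>.1 ?_
    rw [pairEnergy_energyRadius hp hz']
    exact h2

lemma continuousAt_fiberDensity {p m c r : ℝ} (hp : 2 ≤ p) (hcm : c ^ 2 ≤ m)
    (hmr : 0 < m + r ^ 2) :
    ContinuousAt (fun z : ℝ × ℝ × ℝ => fiberDensity p z.1 z.2.1 z.2.2) (m, c, r) := by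
  have hX : Continuous fun z : ℝ × ℝ × ℝ => z.1 + 2 * z.2.1 * z.2.2 + z.2.2 ^ 2 := by fun_prop
  have hY : Continuous fun z : ℝ × ℝ × ℝ => z.1 - 2 * z.2.1 * z.2.2 + z.2.2 ^ 2 := by fun_prop
  have h2 : (0 : ℝ) ≤ (p - 2) / 2 := by linarith
  have h4 : (0 : ℝ) ≤ (p - 2) / 4 := by linarith
  have hS : ContinuousAt (fun z : ℝ × ℝ × ℝ => powSlope p
      (z.1 + 2 * z.2.1 * z.2.2 + z.2.2 ^ 2) (z.1 - 2 * z.2.1 * z.2.2 + z.2.2 ^ 2)) (m, c, r) :=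
    ContinuousAt.comp (f := fun z : ℝ × ℝ × ℝ => (z.1 + 2 * z.2.1 * z.2.2 + z.2.2 ^ 2,
      z.1 - 2 * z.2.1 * z.2.2 + z.2.2 ^ 2)) (g := fun z : ℝ × ℝ => powSlope p z.1 z.2)
      (continuousAt_powSlope hp
        (by dsimp only; linarith)) (hX.prodMk hY).continuousAt
  have hD := (fiberDenom_bounds hp hcm hmr).1
  refine (((hX.rpow_const fun _ => Or.inr h4).mul
    (hY.rpow_const fun _ => Or.inr h4)).continuousAt).div (continuousAt_const.mul ?_)
    (by dsimp only; positivity)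
  unfold fiberDenom
  exact ((by fun_prop : Continuous fun z : ℝ × ℝ × ℝ => 4 * z.2.1 ^ 2).continuousAt.mul hS).add
    ((hX.rpow_const fun _ => Or.inr h2).add (hY.rpow_const fun _ => Or.inr h2)).continuousAt

lemma measurable_fiberDensity (p : ℝ) :
    Measurable fun z : ℝ × ℝ × ℝ => fiberDensity p z.1 z.2.1 z.2.2 := by
  have hS : Measurable fun z : ℝ × ℝ × ℝ => powSlope p
      (z.1 + 2 * z.2.1 * z.2.2 + z.2.2 ^ 2) (z.1 - 2 * z.2.1 * z.2.2 + z.2.2 ^ 2) :=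
    (measurable_powSlope p).comp (f := fun z : ℝ × ℝ × ℝ => (z.1 + 2 * z.2.1 * z.2.2 + z.2.2 ^ 2,
      z.1 - 2 * z.2.1 * z.2.2 + z.2.2 ^ 2)) (by fun_prop)
  unfold fiberDensity fiberDenom
  fun_prop

lemma integral_inv_one_add_mul_cos_sq {k : ℝ} (hk : 0 ≤ k) (α : ℝ) :
    ∫ θ in -Real.pi..Real.pi, 1 / (1 + k * Real.cos (θ - α) ^ 2) =
      2 * Real.pi / Real.sqrt (1 + k) := by
  set s := Real.sqrt (1 + k) with hs
  have hs0 : 0 < s := Real.sqrt_pos.2 (by linarith)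
  have hsk : s ^ 2 = 1 + k := Real.sq_sqrt (by linarith)
  have hden : ∀ t, 0 < s * Real.cos t ^ 2 + Real.sin t ^ 2 := fun t => by
    have h1 := Real.sin_sq_add_cos_sq t
    rcases (sq_nonneg (Real.cos t)).eq_or_lt with h | h
    · rw [← h] at h1 ⊢; linarith
    · have := mul_pos hs0 h
      nlinarith [sq_nonneg (Real.sin t)]
  have hder : ∀ θ ∈ Set.uIcc (-Real.pi) Real.pi, HasDerivAt (fun θ => (1 / s) * (θ - Real.arctan
      ((s - 1) * (Real.sin (θ - α) * Real.cos (θ - α)) /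
        (s * Real.cos (θ - α) ^ 2 + Real.sin (θ - α) ^ 2))))
      (1 / (1 + k * Real.cos (θ - α) ^ 2)) θ := by
    intro θ _
    have hsub : HasDerivAt (fun θ => θ - α) 1 θ := (hasDerivAt_id θ).sub_const α
    have hsin := (Real.hasDerivAt_sin (θ - α)).comp θ hsub
    have hcos := (Real.hasDerivAt_cos (θ - α)).comp θ hsub
    have h := (((hasDerivAt_id θ).sub ((((hsin.mul hcos).const_mul (s - 1)).div
      (((hcos.pow 2).const_mul s).add (hsin.pow 2)) (hden (θ - α)).ne').arctan)).const_mul (1 / s))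
    refine h.congr_deriv ?_
    simp only [Function.comp_apply, Pi.mul_apply, Pi.pow_apply, Pi.add_apply, Pi.div_apply, mul_one]
    have hd := hden (θ - α)
    have h1 := Real.sin_sq_add_cos_sq (θ - α)
    generalize Real.sin (θ - α) = S at *
    generalize Real.cos (θ - α) = C at *
    have hk' : k = s ^ 2 - 1 := by linarith
    have hq : 0 < 1 + k * C ^ 2 := by positivity
    have hS : S ^ 2 = 1 - C ^ 2 := by linarith
    have hN : (s * C ^ 2 + S ^ 2) ^ 2 + ((s - 1) * (S * C)) ^ 2 = 1 + k * C ^ 2 := by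
      rw [mul_pow, mul_pow, hS, hk']; ring
    have hN' : 1 + ((s - 1) * (S * C) / (s * C ^ 2 + S ^ 2)) ^ 2 =
        (1 + k * C ^ 2) / (s * C ^ 2 + S ^ 2) ^ 2 := by
      rw [← hN]; field_simp
    have hnum : (s - 1) * (C * C + S * -S) * (s * C ^ 2 + S ^ 2) -
        (s - 1) * (S * C) * (s * (((2 : ℕ) : ℝ) * C ^ (2 - 1) * -S) +
          ((2 : ℕ) : ℝ) * S ^ (2 - 1) * C) =
        (s - 1) * (s * C ^ 2 - S ^ 2) := by
      norm_num
      linear_combination (s - 1) * (s * C ^ 2 - S ^ 2) * h1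
    have hfin : 1 + k * C ^ 2 - (s - 1) * (s * C ^ 2 - S ^ 2) = s := by
      rw [hS, hk']; ring
    rw [hN', hnum]
    field_simp
    exact hfin
  rw [intervalIntegral.integral_eq_sub_of_hasDerivAt hder]
  · simp only [Real.sin_sub, Real.cos_sub, Real.sin_pi, Real.cos_pi, Real.sin_neg, Real.cos_neg]
    ring_nf
  · apply Continuous.intervalIntegrable
    refine Continuous.div (by fun_prop) (by fun_prop) fun θ => ?_
    positivity

/-- The inner product of `ξ / 2` with the unit vector of angle `θ`. -/
def angularCoord (ξ : R2) (θ : ℝ) : ℝ := (ξ 0 * Real.cos θ + ξ 1 * Real.sin θ) / 2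

/-- The contribution of the direction `θ` to the density of the convolution at `(ξ, τ)`. -/
def angularDensity (p : ℝ) (ξ : R2) (τ θ : ℝ) : ℝ :=
  fiberDensity p (‖ξ‖ ^ 2 / 4) (angularCoord ξ θ)
    (energyRadius p (‖ξ‖ ^ 2 / 4) (angularCoord ξ θ) τ)

lemma norm_sq_R2 (ξ : R2) : ‖ξ‖ ^ 2 = ξ 0 ^ 2 + ξ 1 ^ 2 := by
  rw [EuclideanSpace.real_norm_sq_eq, Fin.sum_univ_two]

lemma angularCoord_sq_le (ξ : R2) (θ : ℝ) : angularCoord ξ θ ^ 2 ≤ ‖ξ‖ ^ 2 / 4 := by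
  rw [norm_sq_R2, angularCoord]
  have h := Real.sin_sq_add_cos_sq θ
  have : ξ 0 ^ 2 + ξ 1 ^ 2 = (ξ 0 * Real.cos θ + ξ 1 * Real.sin θ) ^ 2 +
      (ξ 0 * Real.sin θ - ξ 1 * Real.cos θ) ^ 2 := by
    linear_combination -(ξ 0 ^ 2 + ξ 1 ^ 2) * h
  nlinarith [sq_nonneg (ξ 0 * Real.sin θ - ξ 1 * Real.cos θ)]

lemma norm_rpow_eq (p : ℝ) (ξ : R2) : ‖ξ‖ ^ p = (‖ξ‖ ^ 2) ^ (p / 2) := by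
  rw [← Real.rpow_natCast_mul (norm_nonneg ξ)]
  congr 1; push_cast; ring

lemma two_mul_rpow_eq (p : ℝ) (ξ : R2) :
    2 * (‖ξ‖ ^ 2 / 4) ^ (p / 2) = (2 : ℝ) ^ (1 - p) * ‖ξ‖ ^ p := by
  rw [Real.div_rpow (by positivity) (by norm_num), ← norm_rpow_eq, Real.rpow_sub two_pos,
    Real.rpow_one, show (4 : ℝ) = 2 ^ (2 : ℝ) by norm_num, ← Real.rpow_mul (by norm_num),
    show 2 * (p / 2) = p by ring]
  ring

lemma norm_half_add_sq (ξ : R2) (r θ : ℝ) :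
    ‖(2⁻¹ : ℝ) • ξ + !₂[r * Real.cos θ, r * Real.sin θ]‖ ^ 2 =
      ‖ξ‖ ^ 2 / 4 + 2 * angularCoord ξ θ * r + r ^ 2 := by
  simp only [norm_sq_R2, angularCoord, PiLp.add_apply, PiLp.smul_apply, smul_eq_mul,
    Matrix.cons_val_zero, Matrix.cons_val_one]
  linear_combination r ^ 2 * Real.sin_sq_add_cos_sq θ

lemma norm_half_sub_sq (ξ : R2) (r θ : ℝ) :
    ‖(2⁻¹ : ℝ) • ξ - !₂[r * Real.cos θ, r * Real.sin θ]‖ ^ 2 =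
      ‖ξ‖ ^ 2 / 4 - 2 * angularCoord ξ θ * r + r ^ 2 := by
  simp only [norm_sq_R2, angularCoord, PiLp.sub_apply, PiLp.smul_apply, smul_eq_mul,
    Matrix.cons_val_zero, Matrix.cons_val_one]
  linear_combination r ^ 2 * Real.sin_sq_add_cos_sq θ

lemma norm_rpow_add_norm_rpow_polar (p : ℝ) (ξ : R2) (r θ : ℝ) :
    ‖(2⁻¹ : ℝ) • ξ + !₂[r * Real.cos θ, r * Real.sin θ]‖ ^ p +
      ‖(2⁻¹ : ℝ) • ξ - !₂[r * Real.cos θ, r * Real.sin θ]‖ ^ p =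
      pairEnergy p (‖ξ‖ ^ 2 / 4) (angularCoord ξ θ) r := by
  rw [norm_rpow_eq, norm_rpow_eq p (_ - _), norm_half_add_sq, norm_half_sub_sq]
  rfl

lemma continuous_energyRadius_angular {p : ℝ} (hp : 2 ≤ p) :
    Continuous fun z : R2 × ℝ × ℝ =>
      energyRadius p (‖z.1‖ ^ 2 / 4) (angularCoord z.1 z.2.2) z.2.1 :=
  (continuousOn_energyRadius hp).comp_continuous
    (f := fun z : R2 × ℝ × ℝ => (‖z.1‖ ^ 2 / 4, angularCoord z.1 z.2.2, z.2.1))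
    (by unfold angularCoord; fun_prop) fun z => angularCoord_sq_le z.1 z.2.2

lemma measurable_angularDensity {p : ℝ} (hp : 2 ≤ p) :
    Measurable fun z : R2 × ℝ × ℝ => angularDensity p z.1 z.2.1 z.2.2 := by
  refine (measurable_fiberDensity p).comp (f := fun z : R2 × ℝ × ℝ => (‖z.1‖ ^ 2 / 4,
    angularCoord z.1 z.2.2, energyRadius p (‖z.1‖ ^ 2 / 4) (angularCoord z.1 z.2.2) z.2.1)) ?_
  have := (continuous_energyRadius_angular hp).measurable
  have h : Measurable fun z : R2 × ℝ × ℝ => angularCoord z.1 z.2.2 :=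
    (by unfold angularCoord; fun_prop : Continuous _).measurable
  fun_prop

lemma continuousAt_angularDensity {p : ℝ} (hp : 2 ≤ p) {ξ : R2} {τ : ℝ} (h : ξ ≠ 0 ∨ 0 < τ)
    (θ : ℝ) :
    ContinuousAt (fun z : R2 × ℝ × ℝ => angularDensity p z.1 z.2.1 z.2.2) (ξ, τ, θ) := by
  have hm : 0 < ‖ξ‖ ^ 2 / 4 ∨ 0 < τ := h.imp_left fun h => by
    have := norm_pos_iff.2 h
    positivity
  refine ContinuousAt.comp (f := fun z : R2 × ℝ × ℝ => (‖z.1‖ ^ 2 / 4,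
    angularCoord z.1 z.2.2, energyRadius p (‖z.1‖ ^ 2 / 4) (angularCoord z.1 z.2.2) z.2.1))
    (g := fun z : ℝ × ℝ × ℝ => fiberDensity p z.1 z.2.1 z.2.2)
    (continuousAt_fiberDensity hp (angularCoord_sq_le ξ θ)
      (sq_energyRadius_add_pos hp (angularCoord_sq_le ξ θ) hm)) ?_
  have := continuous_energyRadius_angular hp
  have h : Continuous fun z : R2 × ℝ × ℝ => angularCoord z.1 z.2.2 := by
    unfold angularCoord; fun_prop
  exact (by fun_prop : Continuous _).continuousAt

lemma lintegral_radius_eq {p m c : ℝ} (hp : 2 ≤ p) (hcm : c ^ 2 ≤ m) (φ : ℝ → ℝ≥0∞) :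
    ∫⁻ r in Set.Ioi 0, ENNReal.ofReal r * (ENNReal.ofReal
      ((m + 2 * c * r + r ^ 2) ^ ((p - 2) / 4) * (m - 2 * c * r + r ^ 2) ^ ((p - 2) / 4)) *
        φ (pairEnergy p m c r)) =
    ∫⁻ τ in Set.Ici (2 * m ^ (p / 2)),
      ENNReal.ofReal (fiberDensity p m c (energyRadius p m c τ)) * φ τ := by
  rw [← setLIntegral_congr Ioi_ae_eq_Ici, ← image_pairEnergy hp hcm,
    lintegral_image_eq_lintegral_abs_deriv_mul measurableSet_Ioi
      (fun r _ => (hasDerivAt_pairEnergy hp m c r).hasDerivWithinAt)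
      ((strictMonoOn_pairEnergy hp hcm).injOn.mono Set.Ioi_subset_Ici_self)]
  refine setLIntegral_congr_fun measurableSet_Ioi fun r (hr : 0 < r) => ?_
  have hm : 0 ≤ m := (sq_nonneg c).trans hcm
  have hD := (fiberDenom_bounds (r := r) hp hcm (by positivity)).1
  have hpos : 0 ≤ p * r * fiberDenom p m c r := by positivity
  rw [energyRadius_pairEnergy hp hcm hr.le, ← mul_assoc, ← mul_assoc, abs_of_nonneg hpos,
    ← ENNReal.ofReal_mul hr.le, ← ENNReal.ofReal_mul hpos]
  congr 2
  unfold fiberDensity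
  field_simp

lemma lintegral_R2_polar (f : R2 → ℝ≥0∞) (hf : Measurable f) :
    ∫⁻ u, f u = ∫⁻ θ in Set.Ioo (-Real.pi) Real.pi, ∫⁻ r in Set.Ioi (0 : ℝ),
      ENNReal.ofReal r * f !₂[r * Real.cos θ, r * Real.sin θ] := by
  have h1 : MeasurePreserving (fun z : ℝ × ℝ => (!₂[z.1, z.2] : R2)) := by
    exact (PiLp.volume_preserving_toLp (Fin 2)).comp (volume_preserving_finTwoArrow ℝ).symm
  rw [← h1.lintegral_comp hf, ← lintegral_comp_polarCoord_symm, polarCoord_target,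
    Measure.volume_eq_prod, ← Measure.prod_restrict, lintegral_prod_symm]
  · rfl
  · have : Measurable fun z : ℝ × ℝ => f !₂[z.1 * Real.cos z.2, z.1 * Real.sin z.2] :=
      hf.comp (h1.measurable.comp (by fun_prop :
        Measurable fun z : ℝ × ℝ => (z.1 * Real.cos z.2, z.1 * Real.sin z.2)))
    exact (Measurable.mul (by fun_prop) this).aemeasurable

lemma lintegral_prod_midpoint (f : R2 × R2 → ℝ≥0∞) (hf : Measurable f) :
    ∫⁻ z, f z = ∫⁻ ξ : R2, ∫⁻ u : R2, f ((2⁻¹ : ℝ) • ξ + u, (2⁻¹ : ℝ) • ξ - u) := by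
  calc ∫⁻ z, f z = ∫⁻ y, ∫⁻ z, f (y, z) := by
        rw [Measure.volume_eq_prod, lintegral_prod _ hf.aemeasurable]
    _ = ∫⁻ y : R2, ∫⁻ ξ : R2, f (y, ξ - y) := by
        refine lintegral_congr fun y => ?_
        rw [lintegral_sub_right_eq_self (fun z => f (y, z)) y]
    _ = ∫⁻ ξ : R2, ∫⁻ y : R2, f (y, ξ - y) := by
        refine lintegral_lintegral_swap (Measurable.aemeasurable ?_)
        exact hf.comp (by fun_prop)
    _ = _ := by
        refine lintegral_congr fun ξ => ?_
        rw [← lintegral_add_left_eq_self (fun y => f (y, ξ - y)) ((2⁻¹ : ℝ) • ξ)]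
        refine lintegral_congr fun u => ?_
        congr 2
        module

/-- The weight of the measure `wν_p`, as a density on `ℝ²`. -/
def weightedVolume (p : ℝ) : Measure R2 :=
  volume.withDensity fun y => ENNReal.ofReal (‖y‖ ^ ((p - 2) / 2))

/-- The map `(y, z) ↦ (y + z, ‖y‖ ^ p + ‖z‖ ^ p)`. -/
def pairSumMap (p : ℝ) (z : R2 × R2) : R3 := (z.1 + z.2, ‖z.1‖ ^ p + ‖z.2‖ ^ p)

instance (p : ℝ) : SFinite (weightedVolume p) := by
  unfold weightedVolume; infer_instance

lemma continuous_pairSumMap {p : ℝ} (hp : 2 ≤ p) : Continuous (pairSumMap p) := by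
  have h : 0 ≤ p := by linarith
  unfold pairSumMap
  exact (continuous_fst.add continuous_snd).prodMk
    ((continuous_fst.norm.rpow_const fun _ => Or.inr h).add
      (continuous_snd.norm.rpow_const fun _ => Or.inr h))

lemma mconv_wProj_eq_map (p : ℝ) :
    mconv (wProj (fun y => ‖y‖ ^ p) fun y => ‖y‖ ^ ((p - 2) / 2))
      (wProj (fun y => ‖y‖ ^ p) fun y => ‖y‖ ^ ((p - 2) / 2)) =
    ((weightedVolume p).prod (weightedVolume p)).map (pairSumMap p) := by
  have hg : Measurable fun y : R2 => (y, ‖y‖ ^ p) := by fun_prop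
  change Measure.map _ ((Measure.map _ (weightedVolume p)).prod
    (Measure.map _ (weightedVolume p))) = _
  rw [Measure.map_prod_map _ _ hg hg, Measure.map_map (by fun_prop) (hg.prodMap hg)]
  rfl

lemma ofReal_weight_mul_weight (p : ℝ) (ξ : R2) (r θ : ℝ) :
    ENNReal.ofReal (‖(2⁻¹ : ℝ) • ξ + !₂[r * Real.cos θ, r * Real.sin θ]‖ ^ ((p - 2) / 2)) *
      ENNReal.ofReal (‖(2⁻¹ : ℝ) • ξ - !₂[r * Real.cos θ, r * Real.sin θ]‖ ^ ((p - 2) / 2)) =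
    ENNReal.ofReal
      ((‖ξ‖ ^ 2 / 4 + 2 * angularCoord ξ θ * r + r ^ 2) ^ ((p - 2) / 4) *
        (‖ξ‖ ^ 2 / 4 - 2 * angularCoord ξ θ * r + r ^ 2) ^ ((p - 2) / 4)) := by
  rw [← ENNReal.ofReal_mul (by positivity), norm_rpow_eq, norm_rpow_eq _ (_ - _),
    norm_half_add_sq, norm_half_sub_sq, show (p - 2) / 2 / 2 = (p - 2) / 4 by ring]

/-- The region `τ ≥ 2 ^ (1 - p) * ‖ξ‖ ^ p`. -/
def energyRegion (p : ℝ) : Set R3 := {q : R3 | (2 : ℝ) ^ (1 - p) * ‖q.1‖ ^ p ≤ q.2}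

lemma isClosed_energyRegion {p : ℝ} (hp : 2 ≤ p) : IsClosed (energyRegion p) := by
  have : Continuous fun q : R3 => ‖q.1‖ ^ p :=
    continuous_fst.norm.rpow_const fun _ => Or.inr (by linarith)
  exact isClosed_le (by fun_prop) (by fun_prop)

/-- The density of the convolution. -/
def convDensity (p : ℝ) (q : R3) : ℝ≥0∞ :=
  (energyRegion p).indicator (fun q => ∫⁻ θ in Set.Ioo (-Real.pi) Real.pi,
    ENNReal.ofReal (angularDensity p q.1 q.2 θ)) q

lemma measurable_convDensity {p : ℝ} (hp : 2 ≤ p) : Measurable (convDensity p) := by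
  refine Measurable.indicator ?_ (isClosed_energyRegion hp).measurableSet
  refine Measurable.lintegral_prod_right' (f := fun z : R3 × ℝ =>
    ENNReal.ofReal (angularDensity p z.1.1 z.1.2 z.2)) ?_
  exact ((measurable_angularDensity hp).comp (by fun_prop :
    Measurable fun z : R3 × ℝ => (z.1.1, z.1.2, z.2))).ennreal_ofReal

lemma lintegral_prod_weightedVolume {p : ℝ} (f : R2 × R2 → ℝ≥0∞) (hf : Measurable f) :
    ∫⁻ z, f z ∂((weightedVolume p).prod (weightedVolume p)) =
      ∫⁻ z : R2 × R2, ENNReal.ofReal (‖z.1‖ ^ ((p - 2) / 2)) *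
        ENNReal.ofReal (‖z.2‖ ^ ((p - 2) / 2)) * f z := by
  unfold weightedVolume
  rw [prod_withDensity (by fun_prop) (by fun_prop),
    lintegral_withDensity_eq_lintegral_mul _ (by fun_prop) hf, Measure.volume_eq_prod]
  rfl

lemma lintegral_convDensity {p : ℝ} (hp : 2 ≤ p) (φ : R3 → ℝ≥0∞) (hφ : Measurable φ) :
    ∫⁻ z, φ (pairSumMap p z) ∂((weightedVolume p).prod (weightedVolume p)) =
      ∫⁻ q, convDensity p q * φ q := by
  have hs := (continuous_pairSumMap hp).measurable
  have hK := measurable_angularDensity hp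
  have hc := measurable_convDensity hp
  rw [lintegral_prod_weightedVolume (fun z => φ (pairSumMap p z)) (hφ.comp hs),
    lintegral_prod_midpoint _ (by fun_prop), Measure.volume_eq_prod, lintegral_prod _ (by fun_prop)]
  refine lintegral_congr fun ξ => ?_
  rw [lintegral_R2_polar _ (by fun_prop)]
  calc _ = ∫⁻ θ in Set.Ioo (-Real.pi) Real.pi, ∫⁻ τ in Set.Ici (2 * (‖ξ‖ ^ 2 / 4) ^ (p / 2)),
        ENNReal.ofReal (angularDensity p ξ τ θ) * φ (ξ, τ) := by
        refine lintegral_congr fun θ => ?_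
        unfold angularDensity
        rw [← lintegral_radius_eq hp (angularCoord_sq_le ξ θ) fun τ => φ (ξ, τ)]
        refine lintegral_congr fun r => ?_
        dsimp only
        rw [ofReal_weight_mul_weight, pairSumMap, norm_rpow_add_norm_rpow_polar]
        congr 4
        module
    _ = ∫⁻ τ in Set.Ici (2 * (‖ξ‖ ^ 2 / 4) ^ (p / 2)), ∫⁻ θ in Set.Ioo (-Real.pi) Real.pi,
        ENNReal.ofReal (angularDensity p ξ τ θ) * φ (ξ, τ) := by
        refine lintegral_lintegral_swap (Measurable.aemeasurable ?_)
        exact (hK.comp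
          (by fun_prop : Measurable fun z : ℝ × ℝ => (ξ, z.2, z.1))).ennreal_ofReal.mul
          (hφ.comp (by fun_prop))
    _ = _ := by
        rw [← lintegral_indicator measurableSet_Ici]
        refine lintegral_congr fun τ => ?_
        unfold convDensity
        have hiff : τ ∈ Set.Ici (2 * (‖ξ‖ ^ 2 / 4) ^ (p / 2)) ↔ (ξ, τ) ∈ energyRegion p := by
          rw [two_mul_rpow_eq]; rfl
        by_cases h : (ξ, τ) ∈ energyRegion p
        · rw [Set.indicator_of_mem (hiff.2 h), Set.indicator_of_mem h, lintegral_mul_const]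
          exact (hK.comp (by fun_prop : Measurable fun θ : ℝ => (ξ, τ, θ))).ennreal_ofReal
        · rw [Set.indicator_of_notMem (hiff.not.2 h), Set.indicator_of_notMem h, zero_mul]

lemma map_pairSumMap_eq_withDensity {p : ℝ} (hp : 2 ≤ p) :
    ((weightedVolume p).prod (weightedVolume p)).map (pairSumMap p) =
      volume.withDensity (convDensity p) := by
  have hs := (continuous_pairSumMap hp).measurable
  refine Measure.ext fun s h => ?_
  rw [← lintegral_indicator_one h, lintegral_map (measurable_one.indicator h) hs,
    lintegral_convDensity hp _ (measurable_one.indicator h), withDensity_apply _ h,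
    ← lintegral_indicator h]
  refine lintegral_congr fun q => ?_
  by_cases hq : q ∈ s <;> simp [hq]

lemma pairSumMap_mem_energyRegion {p : ℝ} (hp : 2 ≤ p) (z : R2 × R2) :
    pairSumMap p z ∈ energyRegion p := by
  obtain ⟨y, z⟩ := z
  obtain ⟨θ, r, hr, hu⟩ : ∃ θ r : ℝ, 0 ≤ r ∧
      !₂[r * Real.cos θ, r * Real.sin θ] = (2⁻¹ : ℝ) • (y - z) := by
    set u : R2 := (2⁻¹ : ℝ) • (y - z)
    refine ⟨(Complex.mk (u 0) (u 1)).arg, ‖Complex.mk (u 0) (u 1)‖, norm_nonneg _, ?_⟩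
    rw [Complex.norm_mul_cos_arg, Complex.norm_mul_sin_arg]
    ext i; fin_cases i <;> rfl
  have h := norm_rpow_add_norm_rpow_polar p (y + z) r θ
  rw [hu, show (2⁻¹ : ℝ) • (y + z) + (2⁻¹ : ℝ) • (y - z) = y by module,
    show (2⁻¹ : ℝ) • (y + z) - (2⁻¹ : ℝ) • (y - z) = z by module] at h
  change _ ≤ ‖y‖ ^ p + ‖z‖ ^ p
  rw [h, ← two_mul_rpow_eq]
  exact le_pairEnergy hp (angularCoord_sq_le _ _) hr

lemma exists_pairSumMap_eq {p : ℝ} (hp : 2 ≤ p) {q : R3} (hq : q ∈ energyRegion p) :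
    ∃ z, pairSumMap p z = q := by
  obtain ⟨ξ, τ⟩ := q
  change _ ≤ τ at hq
  dsimp only at hq
  rw [← two_mul_rpow_eq] at hq
  obtain ⟨r, -, h⟩ := exists_pairEnergy_eq hp (angularCoord_sq_le ξ 0) hq
  refine ⟨((2⁻¹ : ℝ) • ξ + !₂[r * Real.cos 0, r * Real.sin 0],
    (2⁻¹ : ℝ) • ξ - !₂[r * Real.cos 0, r * Real.sin 0]), ?_⟩
  rw [pairSumMap, norm_rpow_add_norm_rpow_polar, h]
  congr 1
  module

instance (p : ℝ) : (weightedVolume p).IsOpenPosMeasure := by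
  refine Measure.AbsolutelyContinuous.isOpenPosMeasure (μ := volume) ?_
  unfold weightedVolume
  refine withDensity_absolutelyContinuous' (by fun_prop) ?_
  filter_upwards [Measure.ae_ne volume (0 : R2)] with y hy
  have : 0 < ‖y‖ := norm_pos_iff.2 hy
  exact (ENNReal.ofReal_pos.2 (by positivity)).ne'

lemma msupport_map_pairSumMap {p : ℝ} (hp : 2 ≤ p) :
    msupport (((weightedVolume p).prod (weightedVolume p)).map (pairSumMap p)) =
      energyRegion p := by
  have hs := continuous_pairSumMap hp
  ext q
  constructor
  · intro h
    by_contra hq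
    refine h _ (isClosed_energyRegion hp).isOpen_compl hq ?_
    rw [Measure.map_apply hs.measurable (isClosed_energyRegion hp).isOpen_compl.measurableSet]
    rw [Set.eq_empty_of_forall_notMem (s := pairSumMap p ⁻¹' (energyRegion p)ᶜ)
      fun z hz => hz (pairSumMap_mem_energyRegion hp z), measure_empty]
  · intro hq U hU hqU
    rw [Measure.map_apply hs.measurable hU.measurableSet]
    obtain ⟨z, rfl⟩ := exists_pairSumMap_eq hp hq
    exact (hU.preimage hs).measure_ne_zero _ ⟨z, hqU⟩

section
variable {p : ℝ} {ξ : R2} {τ : ℝ}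

lemma radius_nondegenerate (hp : 2 ≤ p) (h : ξ ≠ 0 ∨ 0 < τ) (θ : ℝ) :
    0 < ‖ξ‖ ^ 2 / 4 + energyRadius p (‖ξ‖ ^ 2 / 4) (angularCoord ξ θ) τ ^ 2 :=
  sq_energyRadius_add_pos hp (angularCoord_sq_le ξ θ) <| h.imp_left fun h => by
    have := norm_pos_iff.2 h
    positivity

lemma angularDensity_nonneg (hp : 2 ≤ p) (h : ξ ≠ 0 ∨ 0 < τ) (θ : ℝ) :
    0 ≤ angularDensity p ξ τ θ :=
  fiberDensity_nonneg hp (angularCoord_sq_le ξ θ) (radius_nondegenerate hp h θ)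

lemma angularDensity_le (hp : 2 ≤ p) (h : ξ ≠ 0 ∨ 0 < τ) (θ : ℝ) :
    angularDensity p ξ τ θ ≤ 1 / (2 * p) :=
  fiberDensity_le hp (angularCoord_sq_le ξ θ) (radius_nondegenerate hp h θ)

lemma continuous_angularDensity_angle (hp : 2 ≤ p) (h : ξ ≠ 0 ∨ 0 < τ) :
    Continuous (angularDensity p ξ τ) :=
  continuous_iff_continuousAt.2 fun θ =>
    ContinuousAt.comp (f := fun θ : ℝ => (ξ, τ, θ)) (continuousAt_angularDensity hp h θ)
      (by fun_prop : Continuous _).continuousAt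

lemma convDensity_eq_ofReal_integral (hp : 2 ≤ p) (h : ξ ≠ 0 ∨ 0 < τ)
    (hq : (ξ, τ) ∈ energyRegion p) :
    convDensity p (ξ, τ) =
      ENNReal.ofReal (∫ θ in -Real.pi..Real.pi, angularDensity p ξ τ θ) := by
  have hpi : -Real.pi ≤ Real.pi := by linarith [Real.pi_pos]
  have hint := ((continuous_angularDensity_angle hp h).intervalIntegrable
    (-Real.pi) Real.pi (μ := volume)).1
  rw [convDensity, Set.indicator_of_mem hq, intervalIntegral.integral_of_le hpi,
    ofReal_integral_eq_lintegral_ofReal hint (ae_of_all _ (angularDensity_nonneg hp h)),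
    setLIntegral_congr Ioo_ae_eq_Ioc]

lemma integral_const_angle (hp : 2 ≤ p) :
    ∫ _ in -Real.pi..Real.pi, 1 / (2 * p) = Real.pi / p := by
  rw [intervalIntegral.integral_const, smul_eq_mul]
  field_simp
  ring

lemma integral_angularDensity_le (hp : 2 ≤ p) (h : ξ ≠ 0 ∨ 0 < τ) :
    ∫ θ in -Real.pi..Real.pi, angularDensity p ξ τ θ ≤ Real.pi / p := by
  rw [← integral_const_angle hp]
  exact intervalIntegral.integral_mono_on (by linarith [Real.pi_pos])
    ((continuous_angularDensity_angle hp h).intervalIntegrable _ _)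
    (continuous_const.intervalIntegrable _ _) fun θ _ => angularDensity_le hp h θ

lemma integral_angularDensity_lt (hp : 2 < p) (hξ : ξ ≠ 0) :
    ∫ θ in -Real.pi..Real.pi, angularDensity p ξ τ θ < Real.pi / p := by
  have hpi := Real.pi_pos
  rw [← integral_const_angle hp.le]
  refine intervalIntegral.integral_lt_integral_of_continuousOn_of_le_of_exists_lt (by linarith)
    (continuous_angularDensity_angle hp.le (.inl hξ)).continuousOn continuousOn_const
    (fun θ _ => angularDensity_le hp.le (.inl hξ) θ) ?_
  obtain ⟨θ, hθ, hc⟩ : ∃ θ ∈ Set.Icc (-Real.pi) Real.pi, angularCoord ξ θ ≠ 0 := by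
    by_cases h0 : ξ 0 = 0
    · refine ⟨Real.pi / 2, ⟨by linarith, by linarith⟩, fun h => hξ ?_⟩
      simp only [angularCoord, h0, Real.cos_pi_div_two, Real.sin_pi_div_two] at h
      ext i; fin_cases i
      · exact h0
      · change ξ 1 = 0
        linarith
    · refine ⟨0, ⟨by linarith, hpi.le⟩, ?_⟩
      simpa [angularCoord] using h0
  exact ⟨θ, hθ, fiberDensity_lt hp (angularCoord_sq_le ξ θ)
    (radius_nondegenerate hp.le (.inl hξ) θ) hc⟩

lemma integral_angularDensity_zero (hp : 2 ≤ p) (hτ : 0 < τ) :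
    ∫ θ in -Real.pi..Real.pi, angularDensity p 0 τ θ = Real.pi / p := by
  rw [← integral_const_angle hp]
  refine intervalIntegral.integral_congr fun θ _ => ?_
  have h := radius_nondegenerate (ξ := 0) hp (.inr hτ) θ
  have h0 : angularCoord 0 θ = 0 := by simp [angularCoord]
  have hm : ‖(0 : R2)‖ ^ 2 / 4 = 0 := by simp
  have hr := energyRadius_nonneg hp (angularCoord_sq_le 0 θ) τ
  simp only [angularDensity]
  rw [h0, hm] at h hr ⊢
  exact fiberDensity_zero_zero hp (lt_of_le_of_ne hr fun h' => by simp [← h'] at h)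

lemma integral_angularDensity_boundary (hp : 2 ≤ p) (hξ : ξ ≠ 0) :
    ∫ θ in -Real.pi..Real.pi, angularDensity p ξ ((2 : ℝ) ^ (1 - p) * ‖ξ‖ ^ p) θ =
      Real.pi / (p * Real.sqrt (p - 1)) := by
  have hn := norm_pos_iff.2 hξ
  obtain ⟨α, h0, h1⟩ : ∃ α, ξ 0 = ‖ξ‖ * Real.cos α ∧ ξ 1 = ‖ξ‖ * Real.sin α := by
    have hz : ‖Complex.mk (ξ 0) (ξ 1)‖ = ‖ξ‖ := by
      rw [← sq_eq_sq₀ (norm_nonneg _) hn.le, norm_sq_R2, Complex.sq_norm, Complex.normSq_mk]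
      ring
    refine ⟨(Complex.mk (ξ 0) (ξ 1)).arg, ?_, ?_⟩
    · rw [← hz, Complex.norm_mul_cos_arg]
    · rw [← hz, Complex.norm_mul_sin_arg]
  have hint : ∀ θ, angularDensity p ξ ((2 : ℝ) ^ (1 - p) * ‖ξ‖ ^ p) θ =
      1 / (2 * p) * (1 / (1 + (p - 2) * Real.cos (θ - α) ^ 2)) := fun θ => by
    rw [angularDensity, ← two_mul_rpow_eq, energyRadius_self hp (angularCoord_sq_le ξ θ),
      fiberDensity_radius_zero hp (by positivity)]
    congr 4
    rw [angularCoord, h0, h1, Real.cos_sub]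
    field_simp
    ring
  simp_rw [hint]
  rw [intervalIntegral.integral_const_mul, integral_inv_one_add_mul_cos_sq (by linarith),
    show 1 + (p - 2) = p - 1 by ring]
  have : 0 < Real.sqrt (p - 1) := Real.sqrt_pos.2 (by linarith)
  field_simp

lemma continuousAt_integral_angularDensity (hp : 2 ≤ p) (h : ξ ≠ 0 ∨ 0 < τ) :
    ContinuousAt (fun q : R3 => ∫ θ in -Real.pi..Real.pi, angularDensity p q.1 q.2 θ)
      (ξ, τ) := by
  have hev : ∀ᶠ q : R3 in nhds (ξ, τ), q.1 ≠ 0 ∨ 0 < q.2 :=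
    ((isOpen_ne_fun continuous_fst continuous_const).union
      (isOpen_lt continuous_const continuous_snd)).mem_nhds h
  refine intervalIntegral.continuousAt_of_dominated_interval (bound := fun _ => 1 / (2 * p))
    ?_ ?_ (continuous_const.intervalIntegrable _ _) (ae_of_all _ fun θ _ => ?_)
  · filter_upwards [hev] with q hq
    exact (continuous_angularDensity_angle hp hq).aestronglyMeasurable
  · filter_upwards [hev] with q hq
    refine ae_of_all _ fun θ _ => ?_
    rw [Real.norm_of_nonneg (angularDensity_nonneg hp hq θ)]
    exact angularDensity_le hp hq θ
  · exact ContinuousAt.comp (f := fun q : R3 => (q.1, q.2, θ))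
      (g := fun z : R2 × ℝ × ℝ => angularDensity p z.1 z.2.1 z.2.2)
      (continuousAt_angularDensity hp h θ) (by fun_prop : Continuous _).continuousAt

lemma ne_zero_or_pos_of_mem_energyRegion (hp : 2 ≤ p) {q : R3} (hq : q ∈ energyRegion p)
    (h0 : q ≠ 0) : q.1 ≠ 0 ∨ 0 < q.2 := by
  by_contra! h
  refine h0 (Prod.ext h.1 (le_antisymm h.2 ?_))
  have : (2 : ℝ) ^ (1 - p) * ‖q.1‖ ^ p ≤ q.2 := hq
  rwa [h.1, norm_zero, Real.zero_rpow (by linarith), mul_zero] at this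

end

instance : NullSingletonClass (volume : Measure R3) :=
  inferInstanceAs (NullSingletonClass ((volume : Measure R2).prod (volume : Measure ℝ)))

lemma ae_convDensity_eq {p : ℝ} (hp : 2 ≤ p) :
    ∀ᵐ q : R3, convDensity p q = ENNReal.ofReal ((energyRegion p).indicator
      (fun q => ∫ θ in -Real.pi..Real.pi, angularDensity p q.1 q.2 θ) q) := by
  filter_upwards [Measure.ae_ne volume (0 : R3)] with q h0
  by_cases hq : q ∈ energyRegion p
  · rw [Set.indicator_of_mem hq]
    exact convDensity_eq_ofReal_integral hp (ne_zero_or_pos_of_mem_energyRegion hp hq h0) hq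
  · rw [Set.indicator_of_notMem hq, ENNReal.ofReal_zero, convDensity,
      Set.indicator_of_notMem hq]

lemma ae_convDensity_le {p : ℝ} (hp : 2 ≤ p) :
    ∀ᵐ q : R3, convDensity p q ≤ ENNReal.ofReal (Real.pi / p) := by
  filter_upwards [ae_convDensity_eq hp, Measure.ae_ne volume (0 : R3)] with q h h0
  rw [h]
  refine ENNReal.ofReal_le_ofReal ?_
  by_cases hq : q ∈ energyRegion p
  · rw [Set.indicator_of_mem hq]
    exact integral_angularDensity_le hp (ne_zero_or_pos_of_mem_energyRegion hp hq h0)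
  · rw [Set.indicator_of_notMem hq]
    have := Real.pi_pos
    positivity

lemma essSup_convDensity {p : ℝ} (hp : 2 ≤ p) :
    essSup (convDensity p) volume = ENNReal.ofReal (Real.pi / p) := by
  refine le_antisymm (essSup_le_of_ae_le _ (ae_convDensity_le hp)) (le_of_not_gt fun hlt => ?_)
  have hcont := continuousAt_integral_angularDensity (ξ := 0) hp (.inr one_pos)
  rw [← integral_angularDensity_zero hp one_pos] at hlt
  have h1 : ∀ᶠ q : R3 in nhds (0, 1), essSup (convDensity p) volume <
      ENNReal.ofReal (∫ θ in -Real.pi..Real.pi, angularDensity p q.1 q.2 θ) :=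
    (ENNReal.continuous_ofReal.continuousAt.comp hcont).eventually_const_lt hlt
  have h2 : ∀ᶠ q : R3 in nhds (0, 1), (2 : ℝ) ^ (1 - p) * ‖q.1‖ ^ p < q.2 := by
    have : Continuous fun q : R3 => ‖q.1‖ ^ p :=
      continuous_fst.norm.rpow_const fun _ => Or.inr (by linarith)
    refine (isOpen_lt (by fun_prop) (by fun_prop) : IsOpen
      {q : R3 | (2 : ℝ) ^ (1 - p) * ‖q.1‖ ^ p < q.2}).mem_nhds ?_
    simp [Real.zero_rpow (show p ≠ 0 by linarith)]
  have h3 : ∀ᶠ q : R3 in nhds (0, 1), 0 < q.2 :=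
    (isOpen_lt continuous_const continuous_snd).mem_nhds (Set.mem_ofPred.2 one_pos)
  refine (Measure.measure_pos_of_mem_nhds (volume : Measure R3) (h1.and (h2.and h3))).ne' ?_
  refine measure_mono_null ?_ (ae_iff.1 (ENNReal.ae_le_essSup (μ := volume) (convDensity p)))
  rintro ⟨ξ, τ⟩ ⟨hq1, hq2, hq3⟩
  rw [← convDensity_eq_ofReal_integral hp (.inr hq3) (le_of_lt hq2)] at hq1
  exact not_le.2 hq1

theorem statement4 (p : ℝ) (hp : 2 ≤ p)
    (w : R2 → ℝ) (hw : w = fun y => ‖y‖ ^ ((p - 2) / 2))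
    (wνp : Measure R3) (hwνp : wνp = wProj (fun y => ‖y‖ ^ p) w)
    (Ep : Set R3) (hEp : Ep = {q : R3 | (2:ℝ) ^ (1 - p) * ‖q.1‖ ^ p ≤ q.2}) :
    -- (a) absolute continuity and essential boundedness
    (mconv wνp wνp ≪ volume ∧
      ∃ C : ℝ, ∀ᵐ x ∂volume, (mconv wνp wνp).rnDeriv volume x ≤ ENNReal.ofReal C) ∧
    -- (b) the topological support is `E_p`
    msupport (mconv wνp wνp) = Ep ∧
    -- (c) the case `p > 2`
    (2 < p →
      (∃ F : R3 → ℝ,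
        (∀ᵐ x ∂volume, (mconv wνp wνp).rnDeriv volume x = ENNReal.ofReal (F x)) ∧
        ContinuousOn F (Ep \ {(0 : R3)}) ∧
        (∀ ξ : R2, ξ ≠ 0 → F (ξ, (2:ℝ) ^ (1 - p) * ‖ξ‖ ^ p) =
          Real.pi / (p * Real.sqrt (p - 1))) ∧
        (∀ τ : ℝ, 0 < τ → F ((0 : R2), τ) = Real.pi / p) ∧
        (∀ q ∈ Ep, q.1 ≠ 0 → F q < Real.pi / p)) ∧
      essSup ((mconv wνp wνp).rnDeriv volume) volume = ENNReal.ofReal (Real.pi / p)) := by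
  have hEp' : Ep = energyRegion p := hEp
  have hconv : mconv wνp wνp = volume.withDensity (convDensity p) := by
    rw [hwνp, hw, mconv_wProj_eq_map, map_pairSumMap_eq_withDensity hp]
  have hrn : (mconv wνp wνp).rnDeriv volume =ᵐ[volume] convDensity p := by
    rw [hconv]
    exact Measure.rnDeriv_withDensity _ (measurable_convDensity hp)
  refine ⟨⟨?_, Real.pi / p, ?_⟩, ?_, fun hp2 => ⟨⟨(energyRegion p).indicator
    fun q => ∫ θ in -Real.pi..Real.pi, angularDensity p q.1 q.2 θ, ?_, ?_, ?_, ?_, ?_⟩, ?_⟩⟩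
  · rw [hconv]
    exact withDensity_absolutelyContinuous _ _
  · filter_upwards [hrn, ae_convDensity_le hp] with q h1 h2
    rwa [h1]
  · rw [hwνp, hw, mconv_wProj_eq_map, msupport_map_pairSumMap hp, hEp']
  · filter_upwards [hrn, ae_convDensity_eq hp] with q h1 h2
    rw [h1, h2]
  · rw [hEp']
    refine ContinuousOn.congr (f := fun q : R3 =>
      ∫ θ in -Real.pi..Real.pi, angularDensity p q.1 q.2 θ) (fun q hq => ?_)
      fun q hq => Set.indicator_of_mem hq.1 _
    exact (continuousAt_integral_angularDensity hp
      (ne_zero_or_pos_of_mem_energyRegion hp hq.1 hq.2)).continuousWithinAt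
  · intro ξ hξ
    rw [Set.indicator_of_mem (show (ξ, _) ∈ energyRegion p from
      le_refl ((2 : ℝ) ^ (1 - p) * ‖ξ‖ ^ p))]
    exact integral_angularDensity_boundary hp hξ
  · intro τ hτ
    rw [Set.indicator_of_mem]
    · exact integral_angularDensity_zero hp hτ
    · change _ ≤ τ
      simpa [Real.zero_rpow (show p ≠ 0 by linarith)] using hτ.le
  · intro q hq hξ
    rw [Set.indicator_of_mem (hEp' ▸ hq)]
    exact integral_angularDensity_lt hp2 hξ
  · rw [essSup_congr_ae hrn, essSup_convDensity hp]
end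
end

section
/- Let φ : ℝ² → ℝ be a nonnegative, convex, twice continuously differentiable function, let ψ = |·|² + φ, and let σ be the projection measure on the graph of ψ. Then there exists a function F : ℝ³ → ℝ, equal Lebesgue-almost everywhere to the Radon–Nikodym derivative of σ ∗ σ with respect to Lebesgue measure, which is continuous on the set {(ξ, τ) ∈ ℝ² × ℝ : τ ≥ 2ψ(ξ/2)} and satisfies, for every ξ ∈ ℝ², F(ξ, 2ψ(ξ/2)) = π / √(det H(ψ)(ξ/2)), where H(ψ)(x) is the Hessian matrix of ψ at x. -/
open MeasureTheory Filter
open scoped ENNReal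

noncomputable section

/-- Projection measure on the graph of `Ψ`. -/
def proj (Ψ : R2 → ℝ) : Measure R3 :=
  Measure.map (fun y => (y, Ψ y)) volume

/-- Hessian matrix of `φ` at `y`. -/
def Hess (φ : R2 → ℝ) (y : R2) : Matrix (Fin 2) (Fin 2) ℝ :=
  Matrix.of fun i j =>
    iteratedFDeriv ℝ 2 φ y ![EuclideanSpace.single i 1, EuclideanSpace.single j 1]

/-- The second derivative of `f` at `x`, as a quadratic form evaluated at `v`. -/
def hessForm (f : R2 → ℝ) (x v : R2) : ℝ :=
  fderiv ℝ (fderiv ℝ f) x v v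

/-- The derivative of `r ↦ f (x + r • v) + f (x - r • v)` divided by `r`, extended continuously
to `r = 0`. -/
def raySlope (f : R2 → ℝ) (x v : R2) (r : ℝ) : ℝ :=
  ∫ s in (-1 : ℝ)..1, hessForm f (x + (r * s) • v) v

/-- The symmetric sum of `f` along the line through `x` with direction `v`. -/
def raySum (f : R2 → ℝ) (x v : R2) (r : ℝ) : ℝ :=
  f (x + r • v) + f (x - r • v)

lemma hasDerivAt_comp_ray {f : R2 → ℝ} (hf : ContDiff ℝ 2 f) (x v : R2) (r : ℝ) :
    HasDerivAt (fun t : ℝ => f (x + t • v)) (fderiv ℝ f (x + r • v) v) r := by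
  have h1 : HasDerivAt (fun t : ℝ => x + t • v) v r := by
    simpa using ((hasDerivAt_id r).smul_const v).const_add x
  exact ((hf.differentiable (by norm_num)) _).hasFDerivAt.comp_hasDerivAt r h1

lemma hasDerivAt_fderiv_comp_ray {f : R2 → ℝ} (hf : ContDiff ℝ 2 f) (x v : R2) (r : ℝ) :
    HasDerivAt (fun t : ℝ => fderiv ℝ f (x + t • v) v) (hessForm f (x + r • v) v) r := by
  have h1 : HasDerivAt (fun t : ℝ => x + t • v) v r := by
    simpa using ((hasDerivAt_id r).smul_const v).const_add x
  have h2 : Differentiable ℝ (fderiv ℝ f) :=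
    (hf.fderiv_right (m := 1) (by norm_num)).differentiable (by norm_num)
  have h3 := (h2 (x + r • v)).hasFDerivAt.comp_hasDerivAt r h1
  simpa [hessForm] using h3.clm_apply (hasDerivAt_const r v)

lemma continuous_hessForm {f : R2 → ℝ} (hf : ContDiff ℝ 2 f) :
    Continuous fun p : R2 × R2 => hessForm f p.1 p.2 := by
  have h2 : Continuous (fderiv ℝ (fderiv ℝ f)) :=
    (hf.fderiv_right (m := 1) (by norm_num)).continuous_fderiv (by norm_num)
  unfold hessForm
  fun_prop

lemma two_mul_sq_norm_le_hessForm {φ : R2 → ℝ} (hconv : ConvexOn ℝ Set.univ φ)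
    (hφ : ContDiff ℝ 2 φ) (x v : R2) :
    2 * ‖v‖ ^ 2 ≤ hessForm (fun y => ‖y‖ ^ 2 + φ y) x v := by
  set ψ : R2 → ℝ := fun y => ‖y‖ ^ 2 + φ y with hψ
  have hψ2 : ContDiff ℝ 2 ψ := (contDiff_norm_sq ℝ).add hφ
  have hc : (fun r : ℝ => φ (x + r • v)) =
      fun r => ψ (x + r • v) - (‖x‖ ^ 2 + r * (2 * inner ℝ x v) + r ^ 2 * ‖v‖ ^ 2) := by
    funext r
    simp only [hψ, norm_add_sq_real, inner_smul_right, norm_smul, mul_pow, Real.norm_eq_abs,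
      sq_abs]
    ring
  have hd (r : ℝ) : HasDerivAt (fun r : ℝ => φ (x + r • v))
      (fderiv ℝ ψ (x + r • v) v - (2 * inner ℝ x v + 2 * r * ‖v‖ ^ 2)) r := by
    rw [hc]
    exact ((hasDerivAt_comp_ray hψ2 x v r).sub
      ((((hasDerivAt_id r).mul_const (2 * inner ℝ x v)).const_add (‖x‖ ^ 2)).add
        ((hasDerivAt_pow 2 r).mul_const (‖v‖ ^ 2)))).congr_deriv (by simp)
  have hcv : ConvexOn ℝ Set.univ (fun r : ℝ => φ (x + r • v)) := by
    have := hconv.comp_affineMap (AffineMap.lineMap x (x + v) : ℝ →ᵃ[ℝ] R2)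
    simpa [Function.comp_def, AffineMap.lineMap_apply, add_comm] using this
  have hmono : Monotone fun r : ℝ =>
      fderiv ℝ ψ (x + r • v) v - (2 * inner ℝ x v + 2 * r * ‖v‖ ^ 2) := by
    have := hcv.monotoneOn_deriv fun r _ => (hd r).differentiableAt
    rw [monotoneOn_univ] at this
    convert this using 2 with r
    exact (hd r).deriv.symm
  have h2 : HasDerivAt (fun r : ℝ =>
      fderiv ℝ ψ (x + r • v) v - (2 * inner ℝ x v + 2 * r * ‖v‖ ^ 2))
      (hessForm ψ x v - 2 * ‖v‖ ^ 2) 0 := by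
    exact ((hasDerivAt_fderiv_comp_ray hψ2 x v 0).sub
      ((((hasDerivAt_id (0 : ℝ)).const_mul 2).mul_const (‖v‖ ^ 2)).const_add
        (2 * inner ℝ x v))).congr_deriv (by simp)
  have := hmono.deriv_nonneg (x := 0)
  rw [h2.deriv] at this
  linarith

lemma mul_raySlope {f : R2 → ℝ} (hf : ContDiff ℝ 2 f) (x v : R2) (r : ℝ) :
    r * raySlope f x v r = fderiv ℝ f (x + r • v) v - fderiv ℝ f (x - r • v) v := by
  have hc := continuous_hessForm hf
  have h := intervalIntegral.integral_eq_sub_of_hasDerivAt (a := -1) (b := 1)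
    (f := fun s : ℝ => fderiv ℝ f (x + (r * s) • v) v)
    (f' := fun s => hessForm f (x + (r * s) • v) v * r)
    (fun s _ => by
      have h2 := (hasDerivAt_id s).const_mul r
      simp only [id, mul_one] at h2
      exact (hasDerivAt_fderiv_comp_ray hf x v (r * s)).comp s h2)
    (Continuous.intervalIntegrable (by fun_prop) _ _)
  rw [intervalIntegral.integral_mul_const] at h
  rw [mul_comm, raySlope, h]
  simp [sub_eq_add_neg]

lemma hasDerivAt_raySum {f : R2 → ℝ} (hf : ContDiff ℝ 2 f) (x v : R2) (r : ℝ) :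
    HasDerivAt (raySum f x v) (r * raySlope f x v r) r := by
  have h := (hasDerivAt_comp_ray hf x v r).add (hasDerivAt_comp_ray hf x (-v) r)
  have heq : raySum f x v = (fun t => f (x + t • v)) + fun t => f (x + t • -v) := by
    funext t
    simp [raySum, sub_eq_add_neg]
  rw [heq, mul_raySlope hf]
  exact h.congr_deriv (by simp [sub_eq_add_neg])

lemma raySlope_zero (f : R2 → ℝ) (x v : R2) : raySlope f x v 0 = 2 * hessForm f x v := by
  simp [raySlope]
  norm_num

lemma continuous_raySlope {f : R2 → ℝ} (hf : ContDiff ℝ 2 f) :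
    Continuous fun p : R2 × R2 × ℝ => raySlope f p.1 p.2.1 p.2.2 := by
  have hc := continuous_hessForm hf
  unfold raySlope
  refine intervalIntegral.continuous_parametric_intervalIntegral_of_continuous' ?_ _ _
  exact hc.comp (f := fun q : (R2 × R2 × ℝ) × ℝ =>
    (q.1.1 + (q.1.2.2 * q.2) • q.1.2.1, q.1.2.1)) (by fun_prop)

lemma continuous_raySum {f : R2 → ℝ} (hf : Continuous f) :
    Continuous fun p : R2 × R2 × ℝ => raySum f p.1 p.2.1 p.2.2 := by
  unfold raySum
  fun_prop

lemma four_le_raySlope {f : R2 → ℝ} (hf : ContDiff ℝ 2 f)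
    (hell : ∀ x v, 2 * ‖v‖ ^ 2 ≤ hessForm f x v) (x : R2) {v : R2} (hv : ‖v‖ = 1) (r : ℝ) :
    4 ≤ raySlope f x v r := by
  have hc := continuous_hessForm hf
  have h := intervalIntegral.integral_mono_on (a := -1) (b := 1) (μ := volume) (by norm_num)
    (f := fun _ : ℝ => (2 : ℝ)) (g := fun s => hessForm f (x + (r * s) • v) v) (by simp)
    (Continuous.intervalIntegrable (by fun_prop) _ _)
    (fun s _ => by simpa [hv] using hell (x + (r * s) • v) v)
  simp only [intervalIntegral.integral_const, smul_eq_mul] at h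
  unfold raySlope
  linarith

lemma strictMonoOn_raySum {f : R2 → ℝ} (hf : ContDiff ℝ 2 f)
    (hell : ∀ x v, 2 * ‖v‖ ^ 2 ≤ hessForm f x v) (x : R2) {v : R2} (hv : ‖v‖ = 1) :
    StrictMonoOn (raySum f x v) (Set.Ici 0) := by
  refine strictMonoOn_of_deriv_pos (convex_Ici 0)
    (fun r _ => (hasDerivAt_raySum hf x v r).continuousAt.continuousWithinAt) fun r hr => ?_
  rw [interior_Ici, Set.mem_Ioi] at hr
  rw [(hasDerivAt_raySum hf x v r).deriv]
  exact mul_pos hr (by linarith [four_le_raySlope hf hell x hv r])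

lemma raySum_zero (f : R2 → ℝ) (x v : R2) : raySum f x v 0 = 2 * f x := by
  simp [raySum, two_mul]

lemma add_sq_le_raySum {f : R2 → ℝ} (hf : ContDiff ℝ 2 f)
    (hell : ∀ x v, 2 * ‖v‖ ^ 2 ≤ hessForm f x v) (x : R2) {v : R2} (hv : ‖v‖ = 1) {r : ℝ}
    (hr : 0 ≤ r) : 2 * f x + 2 * r ^ 2 ≤ raySum f x v r := by
  have hd (t : ℝ) : HasDerivAt (fun t => raySum f x v t - 2 * t ^ 2)
      (t * (raySlope f x v t - 4)) t :=
    ((hasDerivAt_raySum hf x v t).sub ((hasDerivAt_pow 2 t).const_mul 2)).congr_deriv (by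
      push_cast; ring)
  have hm : MonotoneOn (fun t => raySum f x v t - 2 * t ^ 2) (Set.Ici 0) := by
    refine monotoneOn_of_deriv_nonneg (convex_Ici 0)
      (fun t _ => (hd t).continuousAt.continuousWithinAt)
      (fun t _ => (hd t).differentiableAt.differentiableWithinAt) fun t ht => ?_
    rw [interior_Ici, Set.mem_Ioi] at ht
    rw [(hd t).deriv]
    exact mul_nonneg ht.le (by linarith [four_le_raySlope hf hell x hv t])
  have := hm Set.self_mem_Ici hr hr
  simp only [raySum_zero] at this
  linarith

lemma Ici_subset_raySum_image {f : R2 → ℝ} (hf : ContDiff ℝ 2 f)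
    (hell : ∀ x v, 2 * ‖v‖ ^ 2 ≤ hessForm f x v) (x : R2) {v : R2} (hv : ‖v‖ = 1) :
    Set.Ici (2 * f x) ⊆ raySum f x v '' Set.Ici 0 := by
  rw [← raySum_zero f x v]
  refine intermediate_value_Ici
    (fun r _ => (hasDerivAt_raySum hf x v r).continuousAt.continuousWithinAt) ?_
  refine tendsto_atTop_mono' (f₁ := fun r : ℝ => 2 * f x + 2 * r ^ 2) atTop ?_ ?_
  · filter_upwards [eventually_ge_atTop 0] with r hr
    exact add_sq_le_raySum hf hell x hv hr
  · exact tendsto_atTop_add_const_left _ _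
      ((tendsto_pow_atTop two_ne_zero).const_mul_atTop two_pos)

/-- The unit vector with polar angle `θ`. -/
def dir (θ : ℝ) : R2 := !₂[Real.cos θ, Real.sin θ]

lemma norm_dir (θ : ℝ) : ‖dir θ‖ = 1 := by
  simp [dir, EuclideanSpace.norm_eq]

lemma continuous_dir : Continuous dir := by
  unfold dir
  refine (PiLp.continuous_toLp 2 _).comp (continuous_pi fun i => ?_)
  fin_cases i
  · exact Real.continuous_cos
  · exact Real.continuous_sin

lemma exists_continuous_raySum_inverse {f : R2 → ℝ} (hf : ContDiff ℝ 2 f)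
    (hell : ∀ x v, 2 * ‖v‖ ^ 2 ≤ hessForm f x v) :
    ∃ R : R2 × ℝ × ℝ → ℝ, Continuous R ∧ ∀ x θ τ, 0 ≤ R (x, θ, τ) ∧
      raySum f x (dir θ) (R (x, θ, τ)) = max τ (2 * f x) := by
  have hex (p : R2 × ℝ × ℝ) : ∃ r, 0 ≤ r ∧
      raySum f p.1 (dir p.2.1) r = max p.2.2 (2 * f p.1) :=
    Ici_subset_raySum_image hf hell p.1 (norm_dir p.2.1) (Set.mem_Ici.2 (le_max_right _ _))
  choose R hR0 hR using hex
  refine ⟨R, continuous_iff_continuousAt.2 fun p₀ => tendsto_order.2 ⟨fun a ha => ?_,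
    fun b hb => ?_⟩, fun x θ τ => ⟨hR0 (x, θ, τ), hR (x, θ, τ)⟩⟩
  all_goals
    have hfc : Continuous f := hf.continuous
    have hmax : Continuous fun p : R2 × ℝ × ℝ => max p.2.2 (2 * f p.1) := by fun_prop
    have hsum (r : ℝ) : Continuous fun p : R2 × ℝ × ℝ => raySum f p.1 (dir p.2.1) r :=
      (continuous_raySum hfc).comp (f := fun p : R2 × ℝ × ℝ => (p.1, dir p.2.1, r))
        (continuous_fst.prodMk
          ((continuous_dir.comp (continuous_fst.comp continuous_snd)).prodMk continuous_const))
    have hlt (p : R2 × ℝ × ℝ) {r s : ℝ} (hr : 0 ≤ r) (hs : 0 ≤ s) :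
        raySum f p.1 (dir p.2.1) r < raySum f p.1 (dir p.2.1) s ↔ r < s :=
      (strictMonoOn_raySum hf hell p.1 (norm_dir p.2.1)).lt_iff_lt hr hs
  · rcases lt_or_ge a 0 with h | h
    · exact Eventually.of_forall fun p => h.trans_le (hR0 p)
    · have h0 := (hlt p₀ h (hR0 p₀)).2 ha
      rw [hR] at h0
      filter_upwards [(hsum a).continuousAt.eventually_lt hmax.continuousAt h0] with p hp
      rwa [← hR, hlt p h (hR0 p)] at hp
  · have h : 0 ≤ b := (hR0 p₀).trans hb.le
    have h0 := (hlt p₀ (hR0 p₀) h).2 hb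
    rw [hR] at h0
    filter_upwards [hmax.continuousAt.eventually_lt (hsum b).continuousAt h0] with p hp
    rwa [← hR, hlt p (hR0 p) h] at hp

lemma lintegral_ray {f : R2 → ℝ} (hf : ContDiff ℝ 2 f)
    (hell : ∀ x v, 2 * ‖v‖ ^ 2 ≤ hessForm f x v) (x : R2) {v : R2} (hv : ‖v‖ = 1)
    {ρ : ℝ → ℝ} (hρ0 : ∀ τ, 0 ≤ ρ τ) (hρ : ∀ τ, raySum f x v (ρ τ) = max τ (2 * f x))
    (G : ℝ → ℝ≥0∞) :
    ∫⁻ r in Set.Ioi 0, ENNReal.ofReal r * G (raySum f x v r) =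
      ∫⁻ t in Set.Ioi (2 * f x), ENNReal.ofReal (raySlope f x v (ρ t))⁻¹ * G t := by
  have hmono := strictMonoOn_raySum hf hell x hv
  have himage : raySum f x v '' Set.Ioi 0 = Set.Ioi (2 * f x) := by
    ext t
    constructor
    · rintro ⟨r, hr, rfl⟩
      rw [Set.mem_Ioi, ← raySum_zero f x v]
      exact hmono Set.self_mem_Ici (Set.mem_Ioi.1 hr).le hr
    · intro ht
      obtain ⟨r, hr, rfl⟩ := Ici_subset_raySum_image hf hell x hv (Set.mem_Ioi.1 ht).le
      refine ⟨r, (Set.mem_Ici.1 hr).lt_of_ne ?_, rfl⟩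
      rintro rfl
      simp [raySum_zero] at ht
  rw [← himage, lintegral_image_eq_lintegral_abs_deriv_mul measurableSet_Ioi
    (fun r _ => (hasDerivAt_raySum hf x v r).hasDerivWithinAt)
    (hmono.injOn.mono Set.Ioi_subset_Ici_self)]
  refine setLIntegral_congr_fun measurableSet_Ioi fun r hr => ?_
  have hr : 0 < r := hr
  have hρr : ρ (raySum f x v r) = r := by
    refine hmono.injOn (hρ0 _) hr.le ?_
    rw [hρ, max_eq_left]
    exact himage.subset ⟨r, hr, rfl⟩ |>.le
  have hs : 0 < raySlope f x v r := by linarith [four_le_raySlope hf hell x hv r]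
  rw [hρr, ← mul_assoc, ← ENNReal.ofReal_mul (abs_nonneg _), abs_of_pos (mul_pos hr hs),
    mul_inv_cancel_right₀ hs.ne']

lemma integral_inv_quadratic_cos_sin {a b c : ℝ} (ha : 0 < a) (hD : 0 < a * c - b ^ 2) :
    ∫ θ in (-Real.pi)..Real.pi,
      (a * Real.cos θ ^ 2 + 2 * b * (Real.cos θ * Real.sin θ) + c * Real.sin θ ^ 2)⁻¹ =
      2 * Real.pi / √(a * c - b ^ 2) := by
  set s := √(a * c - b ^ 2) with hs
  have hs0 : 0 < s := Real.sqrt_pos.2 hD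
  have hs2 : s ^ 2 = a * c - b ^ 2 := Real.sq_sqrt hD.le
  set q : ℝ → ℝ := fun θ =>
    a * Real.cos θ ^ 2 + 2 * b * (Real.cos θ * Real.sin θ) + c * Real.sin θ ^ 2 with hq
  set n : ℝ → ℝ := fun θ =>
    b * (Real.cos θ ^ 2 - Real.sin θ ^ 2) + (c - a) * (Real.cos θ * Real.sin θ) with hn
  have hqpos (θ : ℝ) : 0 < q θ := by
    have h1 : a * q θ = (a * Real.cos θ + b * Real.sin θ) ^ 2 + s ^ 2 * Real.sin θ ^ 2 := by
      rw [hs2]; simp only [hq]; ring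
    have h2 : 0 < a * q θ := by
      rw [h1]
      rcases eq_or_ne (Real.sin θ) 0 with h | h
      · have : Real.cos θ ≠ 0 := fun h' => by
          have := Real.sin_sq_add_cos_sq θ
          simp [h, h'] at this
        rw [h]
        simp only [mul_zero, add_zero]
        positivity
      · positivity
    exact pos_of_mul_pos_right h2 ha.le
  have hcont : Continuous fun θ => (q θ)⁻¹ :=
    Continuous.inv₀ (by fun_prop) fun θ => (hqpos θ).ne'
  have hderiv (θ : ℝ) :
      HasDerivAt (fun θ => (θ + Real.arctan (n θ / (q θ + s))) / s) (q θ)⁻¹ θ := by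
    have hc := Real.hasDerivAt_cos θ
    have hsn := Real.hasDerivAt_sin θ
    have hcs := Real.sin_sq_add_cos_sq θ
    have hE : q θ + s ≠ 0 := (add_pos (hqpos θ) hs0).ne'
    have hdq : HasDerivAt q (2 * n θ) θ :=
      ((((hc.pow 2).const_mul a).add ((hc.mul hsn).const_mul (2 * b))).add
        ((hsn.pow 2).const_mul c)).congr_deriv (by simp only [hn]; push_cast; ring)
    have hdn : HasDerivAt n (a + c - 2 * q θ) θ :=
      ((((hc.pow 2).sub (hsn.pow 2)).const_mul b).add
        ((hc.mul hsn).const_mul (c - a))).congr_deriv (by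
          simp only [hq]; push_cast; linear_combination (a + c) * hcs)
    refine (((hasDerivAt_id θ).add
      ((hdn.div (hdq.add_const s) hE).arctan)).div_const s).congr_deriv ?_
    have hrel : n θ ^ 2 + q θ ^ 2 + s ^ 2 = (a + c) * q θ := by
      rw [hs2]
      have hhom : n θ ^ 2 + q θ ^ 2 + (a * c - b ^ 2) * (Real.sin θ ^ 2 + Real.cos θ ^ 2) ^ 2 =
          (a + c) * q θ * (Real.sin θ ^ 2 + Real.cos θ ^ 2) := by
        simp only [hn, hq]; ring
      simpa [hcs] using hhom
    have hden : (q θ + s) ^ 2 + n θ ^ 2 = (a + c + 2 * s) * q θ := by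
      linear_combination hrel
    have hpos : 0 < (q θ + s) ^ 2 + n θ ^ 2 :=
      add_pos_of_pos_of_nonneg (by positivity) (sq_nonneg _)
    have hT : a + c + 2 * s ≠ 0 := by
      rintro h
      rw [hden, h, zero_mul] at hpos
      exact hpos.false
    have hq0 := (hqpos θ).ne'
    have hinv : 1 / (1 + (n θ / (q θ + s)) ^ 2) = (q θ + s) ^ 2 / ((a + c + 2 * s) * q θ) := by
      rw [← hden]
      field_simp
    have hnum : (a + c - 2 * q θ) * (q θ + s) - n θ * (2 * n θ) =
        (s - q θ) * (a + c + 2 * s) := by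
      linear_combination -2 * hrel
    rw [Pi.div_apply, hinv, hnum]
    generalize a + c + 2 * s = T at *
    field_simp
    ring
  rw [intervalIntegral.integral_eq_sub_of_hasDerivAt (fun θ _ => hderiv θ)
    (hcont.intervalIntegrable _ _)]
  simp [hn, hq]
  ring

lemma lintegral_polar (g : R2 → ℝ≥0∞) (hg : Measurable g) :
    ∫⁻ η, g η = ∫⁻ θ in Set.Ioo (-Real.pi) Real.pi, ∫⁻ r in Set.Ioi (0 : ℝ),
      ENNReal.ofReal r * g (r • dir θ) := by
  have hmp : MeasurePreserving
      (fun p : ℝ × ℝ => WithLp.toLp 2 (MeasurableEquiv.finTwoArrow.symm p) : ℝ × ℝ → R2)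
      volume volume :=
    (PiLp.volume_preserving_toLp (Fin 2)).comp
      ((volume_preserving_finTwoArrow ℝ).symm MeasurableEquiv.finTwoArrow)
  have hdir : Measurable dir := continuous_dir.measurable
  rw [← hmp.lintegral_comp hg, ← lintegral_comp_polarCoord_symm]
  have heq (p : ℝ × ℝ) : ENNReal.ofReal p.1 •
      g (WithLp.toLp 2 (MeasurableEquiv.finTwoArrow.symm (polarCoord.symm p))) =
      ENNReal.ofReal p.1 * g (p.1 • dir p.2) := by
    rw [smul_eq_mul]
    congr 2
    ext i
    fin_cases i <;> simp [dir, MeasurableEquiv.finTwoArrow, polarCoord]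
  simp_rw [heq]
  rw [polarCoord_target, Measure.volume_eq_prod, ← Measure.prod_restrict, lintegral_prod_symm]
  exact Measurable.aemeasurable (by fun_prop)

lemma lintegral_symm_sum {f : R2 → ℝ} (hf : ContDiff ℝ 2 f)
    (hell : ∀ x v, 2 * ‖v‖ ^ 2 ≤ hessForm f x v) {R : R2 × ℝ × ℝ → ℝ} (hRc : Continuous R)
    (hR : ∀ x θ τ, 0 ≤ R (x, θ, τ) ∧ raySum f x (dir θ) (R (x, θ, τ)) = max τ (2 * f x))
    (x : R2) {G : ℝ → ℝ≥0∞} (hG : Measurable G) :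
    ∫⁻ η, G (f (x + η) + f (x - η)) =
      ∫⁻ t in Set.Ioi (2 * f x), ENNReal.ofReal
        (∫ θ in (-Real.pi)..Real.pi, (raySlope f x (dir θ) (R (x, θ, t)))⁻¹) * G t := by
  have hfc := hf.continuous
  have hdir := continuous_dir
  have hK : Continuous fun p : ℝ × ℝ => (raySlope f x (dir p.1) (R (x, p.1, p.2)))⁻¹ := by
    refine Continuous.inv₀ ?_ fun p => ?_
    · exact (continuous_raySlope hf).comp
        (f := fun p : ℝ × ℝ => (x, dir p.1, R (x, p.1, p.2))) (by fun_prop)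
    · exact (four_pos.trans_le
        (four_le_raySlope hf hell x (norm_dir p.1) (R (x, p.1, p.2)))).ne'
  rw [lintegral_polar _ (by fun_prop)]
  have h1 (θ : ℝ) : ∫⁻ r in Set.Ioi (0 : ℝ), ENNReal.ofReal r *
      G (f (x + r • dir θ) + f (x - r • dir θ)) =
      ∫⁻ t in Set.Ioi (2 * f x),
        ENNReal.ofReal (raySlope f x (dir θ) (R (x, θ, t)))⁻¹ * G t :=
    lintegral_ray hf hell x (norm_dir θ) (fun τ => (hR x θ τ).1) (fun τ => (hR x θ τ).2) G
  simp_rw [h1]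
  rw [lintegral_lintegral_swap
    (Measurable.aemeasurable (hK.measurable.ennreal_ofReal.mul (hG.comp measurable_snd)))]
  refine lintegral_congr fun t => ?_
  have hKt : Continuous fun θ => (raySlope f x (dir θ) (R (x, θ, t)))⁻¹ :=
    hK.comp (f := fun θ : ℝ => (θ, t)) (by fun_prop)
  rw [lintegral_mul_const _ hKt.measurable.ennreal_ofReal,
    intervalIntegral.integral_of_le (by linarith [Real.pi_pos]), integral_Ioc_eq_integral_Ioo,
    ofReal_integral_eq_lintegral_ofReal
      (hKt.integrableOn_Icc.mono_set Set.Ioo_subset_Icc_self)]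
  refine Eventually.of_forall fun θ => inv_nonneg.2 ?_
  linarith [four_le_raySlope hf hell x (norm_dir θ) (R (x, θ, t))]

lemma lintegral_mconv_proj {f : R2 → ℝ} (hf : Measurable f) {h : R3 → ℝ≥0∞}
    (hh : Measurable h) :
    ∫⁻ q, h q ∂mconv (proj f) (proj f) =
      ∫⁻ ξ, ∫⁻ η, h (ξ, f ((2 : ℝ)⁻¹ • ξ + η) + f ((2 : ℝ)⁻¹ • ξ - η)) := by
  unfold mconv proj
  rw [lintegral_map hh (by fun_prop), Measure.map_prod_map _ _ (by fun_prop) (by fun_prop),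
    lintegral_map (by fun_prop) (by fun_prop), lintegral_prod _ (by fun_prop)]
  calc ∫⁻ y, ∫⁻ z, h ((y, f y) + (z, f z))
      = ∫⁻ y, ∫⁻ ξ, h (ξ, f y + f (ξ - y)) := by
        refine lintegral_congr fun y => ?_
        rw [← lintegral_sub_right_eq_self _ y]
        simp
    _ = ∫⁻ ξ, ∫⁻ y, h (ξ, f y + f (ξ - y)) :=
        lintegral_lintegral_swap (Measurable.aemeasurable (by
          unfold Function.uncurry; fun_prop))
    _ = _ := by
        refine lintegral_congr fun ξ => ?_
        rw [← lintegral_add_left_eq_self _ ((2 : ℝ)⁻¹ • ξ)]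
        refine lintegral_congr fun η => ?_
        congr 4
        module

lemma hessForm_eq {f : R2 → ℝ} (hf : ContDiff ℝ 2 f) (x : R2) (a b : ℝ) :
    hessForm f x !₂[a, b] = Hess f x 0 0 * a ^ 2 + 2 * Hess f x 0 1 * (a * b) +
      Hess f x 1 1 * b ^ 2 := by
  have hv : (!₂[a, b] : R2) =
      a • EuclideanSpace.single 0 (1 : ℝ) + b • EuclideanSpace.single 1 (1 : ℝ) := by
    ext i
    fin_cases i <;> simp
  have hsymm := (hf.contDiffAt (x := x)).isSymmSndFDerivAt (by simp)
    (EuclideanSpace.single 1 (1 : ℝ)) (EuclideanSpace.single 0 (1 : ℝ))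
  simp only [hessForm, hv, map_add, map_smul, add_apply,
    smul_apply, smul_eq_mul, Hess, Matrix.of_apply, iteratedFDeriv_two_apply,
    Matrix.cons_val_zero, Matrix.cons_val_one, hsymm]
  ring

lemma det_Hess {f : R2 → ℝ} (hf : ContDiff ℝ 2 f) (x : R2) :
    (Hess f x).det = Hess f x 0 0 * Hess f x 1 1 - Hess f x 0 1 ^ 2 := by
  have hsymm : Hess f x 1 0 = Hess f x 0 1 := by
    simpa [Hess, iteratedFDeriv_two_apply] using
      (hf.contDiffAt (x := x)).isSymmSndFDerivAt (by simp)
        (EuclideanSpace.single 1 (1 : ℝ)) (EuclideanSpace.single 0 (1 : ℝ))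
  rw [Matrix.det_fin_two, hsymm, sq]

lemma integral_inv_two_mul_hessForm_dir {f : R2 → ℝ} (hf : ContDiff ℝ 2 f)
    (hell : ∀ x v, 2 * ‖v‖ ^ 2 ≤ hessForm f x v) (x : R2) :
    ∫ θ in (-Real.pi)..Real.pi, (2 * hessForm f x (dir θ))⁻¹ =
      Real.pi / √(Hess f x).det := by
  have hq (a b : ℝ) : 2 * (a ^ 2 + b ^ 2) ≤ Hess f x 0 0 * a ^ 2 +
      2 * Hess f x 0 1 * (a * b) + Hess f x 1 1 * b ^ 2 := by
    rw [← hessForm_eq hf]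
    simpa [EuclideanSpace.norm_sq_eq] using hell x !₂[a, b]
  have h0 : 0 < Hess f x 0 0 := by linarith [hq 1 0]
  have hD : 0 < Hess f x 0 0 * Hess f x 1 1 - Hess f x 0 1 ^ 2 := by
    have h := hq (Hess f x 0 1) (-Hess f x 0 0)
    have h' : 0 < Hess f x 0 0 * (Hess f x 0 0 * Hess f x 1 1 - Hess f x 0 1 ^ 2) := by
      nlinarith [sq_nonneg (Hess f x 0 1), pow_pos h0 2]
    exact pos_of_mul_pos_right h' h0.le
  simp_rw [dir, hessForm_eq hf, mul_inv]
  rw [intervalIntegral.integral_const_mul, integral_inv_quadratic_cos_sin h0 hD, det_Hess hf]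
  ring

theorem exists_continuous_density {f : R2 → ℝ} (hf : ContDiff ℝ 2 f)
    (hell : ∀ x v, 2 * ‖v‖ ^ 2 ≤ hessForm f x v) :
    ∃ F : R3 → ℝ, Continuous F ∧
      mconv (proj f) (proj f) = volume.withDensity (fun q => ENNReal.ofReal
        ({q : R3 | 2 * f ((2 : ℝ)⁻¹ • q.1) ≤ q.2}.indicator F q)) ∧
      ∀ ξ, F (ξ, 2 * f ((2 : ℝ)⁻¹ • ξ)) =
        Real.pi / √(Hess f ((2 : ℝ)⁻¹ • ξ)).det := by
  obtain ⟨R, hRc, hR⟩ := exists_continuous_raySum_inverse hf hell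
  have hfc := hf.continuous
  have hdir := continuous_dir
  set F : R3 → ℝ := fun q => ∫ θ in (-Real.pi)..Real.pi,
    (raySlope f ((2 : ℝ)⁻¹ • q.1) (dir θ) (R ((2 : ℝ)⁻¹ • q.1, θ, q.2)))⁻¹ with hF
  have hFc : Continuous F := by
    refine intervalIntegral.continuous_parametric_intervalIntegral_of_continuous' ?_ _ _
    refine Continuous.inv₀ ?_ fun p =>
      (four_pos.trans_le (four_le_raySlope hf hell _ (norm_dir p.2) _)).ne'
    exact (continuous_raySlope hf).comp (f := fun p : R3 × ℝ =>
      ((2 : ℝ)⁻¹ • p.1.1, dir p.2, R ((2 : ℝ)⁻¹ • p.1.1, p.2, p.1.2))) (by fun_prop)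
  have hS : MeasurableSet {q : R3 | 2 * f ((2 : ℝ)⁻¹ • q.1) ≤ q.2} :=
    (isClosed_le (by fun_prop) (by fun_prop)).measurableSet
  have hFm : Measurable fun q => ENNReal.ofReal
      ({q : R3 | 2 * f ((2 : ℝ)⁻¹ • q.1) ≤ q.2}.indicator F q) :=
    (hFc.measurable.indicator hS).ennreal_ofReal
  refine ⟨F, hFc, Measure.ext_of_lintegral _ fun h hh => ?_, fun ξ => ?_⟩
  · rw [lintegral_mconv_proj hfc.measurable hh, lintegral_withDensity_eq_lintegral_mul _ hFm hh,
      Measure.volume_eq_prod, lintegral_prod _ (hFm.mul hh).aemeasurable]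
    refine lintegral_congr fun ξ => ?_
    rw [lintegral_symm_sum hf hell hRc hR _ (G := fun t => h (ξ, t)) (by fun_prop),
      setLIntegral_congr Ioi_ae_eq_Ici, ← lintegral_indicator measurableSet_Ici]
    refine lintegral_congr fun t => ?_
    by_cases ht : 2 * f ((2 : ℝ)⁻¹ • ξ) ≤ t <;> simp [ht, hF]
  · rw [← integral_inv_two_mul_hessForm_dir hf hell]
    refine intervalIntegral.integral_congr fun θ _ => ?_
    have h0 : R ((2 : ℝ)⁻¹ • ξ, θ, 2 * f ((2 : ℝ)⁻¹ • ξ)) = 0 := by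
      refine (strictMonoOn_raySum hf hell ((2 : ℝ)⁻¹ • ξ) (norm_dir θ)).injOn (hR _ _ _).1
        Set.self_mem_Ici ?_
      rw [(hR _ _ _).2, raySum_zero, max_self]
    simp only [h0, raySlope_zero]

theorem statement11 (φ : R2 → ℝ) (hφ0 : ∀ y, 0 ≤ φ y)
    (hφconv : ConvexOn ℝ Set.univ φ) (hφC2 : ContDiff ℝ 2 φ)
    (ψ : R2 → ℝ) (hψ : ψ = fun y => ‖y‖ ^ 2 + φ y) :
    ∃ F : R3 → ℝ,
      (∀ᵐ x ∂(volume : Measure R3),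
        (mconv (proj ψ) (proj ψ)).rnDeriv volume x = ENNReal.ofReal (F x)) ∧
      ContinuousOn F {q : R3 | 2 * ψ ((2:ℝ)⁻¹ • q.1) ≤ q.2} ∧
      ∀ ξ : R2, F (ξ, 2 * ψ ((2:ℝ)⁻¹ • ξ)) =
        Real.pi / Real.sqrt ((Hess ψ ((2:ℝ)⁻¹ • ξ)).det) := by
  have hψ2 : ContDiff ℝ 2 ψ := hψ ▸ (contDiff_norm_sq ℝ).add hφC2
  have hell (x v : R2) : 2 * ‖v‖ ^ 2 ≤ hessForm ψ x v :=
    hψ ▸ two_mul_sq_norm_le_hessForm hφconv hφC2 x v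
  have hψc := hψ2.continuous
  obtain ⟨F, hFc, hconv, hF⟩ := exists_continuous_density hψ2 hell
  have hS : MeasurableSet {q : R3 | 2 * ψ ((2 : ℝ)⁻¹ • q.1) ≤ q.2} :=
    (isClosed_le (by fun_prop) (by fun_prop)).measurableSet
  refine ⟨{q : R3 | 2 * ψ ((2 : ℝ)⁻¹ • q.1) ≤ q.2}.indicator F, ?_, ?_, fun ξ => ?_⟩
  · rw [hconv]
    exact Measure.rnDeriv_withDensity _ (hFc.measurable.indicator hS).ennreal_ofReal
  · exact hFc.continuousOn.congr fun q hq => Set.indicator_of_mem hq F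
  · rw [Set.indicator_of_mem (by simp), hF]
end
end

section
/- Let φ : ℝ² → ℝ be a nonnegative, twice continuously differentiable, strictly convex function, let ψ = |·|² + φ, and let σ be the projection measure on the graph of ψ. Let r, ρ > 0 with ρ > 3r and y₀ ∈ ℝ². Then the convolution of the measures 𝟙_{B_r(y₀)}σ and 𝟙_{B_ρ(y₀)ᶜ}σ is absolutely continuous with respect to Lebesgue measure on ℝ³ and its Radon–Nikodym derivative is bounded Lebesgue-almost everywhere by (1/2)·arcsin(2r/(ρ − r)). Moreover, if B and B′ are disjoint open balls in ℝ², then the Radon–Nikodym derivative of 𝟙_B σ ∗ 𝟙_{B′} σ is bounded Lebesgue-almost everywhere by π/4. -/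
open MeasureTheory Filter
open scoped ENNReal

noncomputable section

/-- If `s ↦ f s - 2 * s ^ 2` is monotone on the positive half-line, then `f` pushes `s ds` there
forward to a measure of density at most `1 / 4`. -/
lemma lintegral_mul_indicator_comp_le {f : ℝ → ℝ} (hf : Differentiable ℝ f)
    (hmono : MonotoneOn (fun s => f s - 2 * s ^ 2) (Set.Ici 0)) {D : Set ℝ}
    (hD : MeasurableSet D) :
    ∫⁻ s in Set.Ioi (0 : ℝ), ENNReal.ofReal s * D.indicator 1 (f s) ≤
      ENNReal.ofReal (1 / 4) * volume D := by
  have hderiv : ∀ s ∈ Set.Ioi (0 : ℝ), 4 * s ≤ deriv f s := by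
    intro s hs
    have h1 : HasDerivAt (fun s => f s - 2 * s ^ 2) (deriv f s - 2 * (2 * s)) s :=
      ((hf s).hasDerivAt.sub ((hasDerivAt_pow 2 s).const_mul 2)).congr_deriv (by simp)
    have h2 := hmono.derivWithin_nonneg (x := s)
    rw [derivWithin_of_mem_nhds (Ici_mem_nhds hs), h1.deriv] at h2
    linarith
  have hinj : Set.InjOn f (Set.Ioi 0) := by
    refine StrictMonoOn.injOn fun s hs t ht hst => ?_
    have := hmono (Set.mem_Ici.2 (le_of_lt hs)) (Set.mem_Ici.2 (le_of_lt ht)) hst.le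
    simp only [Set.mem_Ioi] at hs ht this
    nlinarith
  calc ∫⁻ s in Set.Ioi (0 : ℝ), ENNReal.ofReal s * D.indicator 1 (f s)
      ≤ ∫⁻ s in Set.Ioi (0 : ℝ),
          ENNReal.ofReal (1 / 4) * (ENNReal.ofReal |deriv f s| * D.indicator 1 (f s)) := by
        refine setLIntegral_mono' measurableSet_Ioi fun s hs => ?_
        rw [← mul_assoc, ← ENNReal.ofReal_mul (by norm_num)]
        gcongr
        linarith [hderiv s hs, le_abs_self (deriv f s)]
    _ = ENNReal.ofReal (1 / 4) * ∫⁻ t in f '' Set.Ioi 0, D.indicator 1 t := by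
        rw [lintegral_const_mul' _ _ ENNReal.ofReal_ne_top,
          lintegral_image_eq_lintegral_abs_deriv_mul measurableSet_Ioi
            (fun s _ => (hf s).hasDerivAt.hasDerivWithinAt) hinj]
    _ ≤ ENNReal.ofReal (1 / 4) * volume D := by
        gcongr
        exact (setLIntegral_le_lintegral _ _).trans_eq (lintegral_indicator_one hD)

/-- The even part of a convex function along a line is monotone away from its centre. -/
lemma monotoneOn_add_of_convexOn {V : Type*} [AddCommGroup V] [Module ℝ V] {φ : V → ℝ}
    (hφ : ConvexOn ℝ Set.univ φ) (c v : V) :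
    MonotoneOn (fun s : ℝ => φ (c + s • v) + φ (c - s • v)) (Set.Ici 0) := by
  intro s hs t ht hst
  rcases (Set.mem_Ici.1 ht).eq_or_lt with rfl | ht0
  · rw [le_antisymm hst hs]
  have ha : 0 ≤ (t + s) / (2 * t) := div_nonneg (add_nonneg ht hs) (by positivity)
  have hb : 0 ≤ (t - s) / (2 * t) := div_nonneg (by linarith) (by positivity)
  have hab : (t + s) / (2 * t) + (t - s) / (2 * t) = 1 := by field_simp; ring
  have hs' : (t + s) / (2 * t) * t - (t - s) / (2 * t) * t = s := by field_simp; ring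
  have h1 := hφ.2 (Set.mem_univ (c + t • v)) (Set.mem_univ (c - t • v)) ha hb hab
  have h2 := hφ.2 (Set.mem_univ (c + t • v)) (Set.mem_univ (c - t • v)) hb ha
    (by rw [add_comm, hab])
  generalize (t + s) / (2 * t) = a at *
  generalize (t - s) / (2 * t) = b at *
  obtain rfl : b = 1 - a := by linarith
  rw [show a • (c + t • v) + (1 - a) • (c - t • v) = c + s • v by rw [← hs']; module] at h1
  rw [show (1 - a) • (c + t • v) + a • (c - t • v) = c - s • v by rw [← hs']; module] at h2
  simp only [smul_eq_mul] at h1 h2 ⊢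
  linarith

lemma monotoneOn_paraboloid_add {φ : R2 → ℝ} (hφ : ConvexOn ℝ Set.univ φ) (c : R2) {v : R2}
    (hv : ‖v‖ = 1) :
    MonotoneOn (fun s : ℝ => (‖c + s • v‖ ^ 2 + φ (c + s • v)) +
      (‖c - s • v‖ ^ 2 + φ (c - s • v)) - 2 * s ^ 2) (Set.Ici 0) := by
  have h : ∀ s : ℝ, ‖c + s • v‖ ^ 2 + ‖c - s • v‖ ^ 2 = 2 * ‖c‖ ^ 2 + 2 * s ^ 2 := by
    intro s
    rw [norm_add_sq_real, norm_sub_sq_real, norm_smul, hv, mul_one, Real.norm_eq_abs, sq_abs]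
    ring
  intro s hs t ht hst
  have := monotoneOn_add_of_convexOn hφ c v hs ht hst
  simp only at this ⊢
  linarith [h s, h t]

/-- A measurable set which, in polar coordinates around `ξ / 2`, only meets directions in `Θ`,
contributes at most `volume Θ / 4` to the density of the convolution on the fibre over `ξ`. -/
lemma volume_inter_fiber_le {φ : R2 → ℝ} (hφ : ConvexOn ℝ Set.univ φ) (hd : Differentiable ℝ φ)
    (L : ℂ ≃ₗᵢ[ℝ] R2) (ξ : R2) {E : Set R2} (hE : MeasurableSet E) {Θ : Set ℝ}
    (hΘ : MeasurableSet Θ)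
    (hEΘ : ∀ s > 0, ∀ θ ∈ Set.Ioo (-Real.pi) Real.pi,
      (1 / 2 : ℝ) • ξ + L (Complex.polarCoord.symm (s, θ)) ∈ E → θ ∈ Θ)
    {D : Set ℝ} (hD : MeasurableSet D) :
    volume (E ∩ {y | (‖y‖ ^ 2 + φ y) + (‖ξ - y‖ ^ 2 + φ (ξ - y)) ∈ D}) ≤
      volume Θ * (ENNReal.ofReal (1 / 4) * volume D) := by
  set c : R2 := (1 / 2 : ℝ) • ξ with hc
  set F : R2 → ℝ := fun y => (‖y‖ ^ 2 + φ y) + (‖ξ - y‖ ^ 2 + φ (ξ - y)) with hF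
  have hFd : Differentiable ℝ F := by
    have h1 : Differentiable ℝ fun y : R2 => ‖y‖ ^ 2 + φ y :=
      (differentiable_id.norm_sq ℝ).add hd
    exact h1.add (h1.comp (differentiable_id.const_sub ξ))
  have hmeas : MeasurableSet (E ∩ F ⁻¹' D) := hE.inter (hFd.continuous.measurable hD)
  have hpol : ∀ s θ : ℝ, c + L (Complex.polarCoord.symm (s, θ)) =
      c + s • L (Complex.polarCoord.symm (1, θ)) := by
    intro s θ
    rw [← map_smul, Complex.polarCoord_symm_apply, Complex.polarCoord_symm_apply,
      Complex.real_smul, Complex.ofReal_one, one_mul]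
  have hFs : ∀ (s : ℝ) (v : R2), F (c + s • v) = (‖c + s • v‖ ^ 2 + φ (c + s • v)) +
      (‖c - s • v‖ ^ 2 + φ (c - s • v)) := by
    intro s v
    have : ξ - (c + s • v) = c - s • v := by rw [hc]; module
    simp only [hF, this]
  have hLm : Measurable fun p : ℝ × ℝ => c + L (Complex.polarCoord.symm p) := by
    have : Continuous fun p : ℝ × ℝ => Complex.polarCoord.symm p := by
      simp only [Complex.polarCoord_symm_apply]
      fun_prop
    exact (continuous_const.add (L.continuous.comp this)).measurable
  calc volume (E ∩ F ⁻¹' D)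
      = ∫⁻ y, (E ∩ F ⁻¹' D).indicator 1 y := (lintegral_indicator_one hmeas).symm
    _ = ∫⁻ z : ℂ, (E ∩ F ⁻¹' D).indicator 1 (c + L z) := by
        rw [← lintegral_add_left_eq_self _ c, ← L.measurePreserving.lintegral_comp_emb
          L.toHomeomorph.measurableEmbedding]
    _ = ∫⁻ p in Set.Ioi (0 : ℝ) ×ˢ Set.Ioo (-Real.pi) Real.pi, ENNReal.ofReal p.1 *
          (E ∩ F ⁻¹' D).indicator 1 (c + L (Complex.polarCoord.symm p)) := by
        rw [← Complex.lintegral_comp_polarCoord_symm]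
        rfl
    _ ≤ ∫⁻ p in Set.Ioi (0 : ℝ) ×ˢ Set.Ioo (-Real.pi) Real.pi, Θ.indicator 1 p.2 *
          (ENNReal.ofReal p.1 *
            D.indicator 1 (F (c + L (Complex.polarCoord.symm p)))) := by
        refine setLIntegral_mono' (measurableSet_Ioi.prod measurableSet_Ioo) fun p hp => ?_
        by_cases h : c + L (Complex.polarCoord.symm p) ∈ E ∩ F ⁻¹' D
        · have h2 : F (c + L (Complex.polarCoord.symm p)) ∈ D := h.2
          simp only [Set.indicator_of_mem h, Set.indicator_of_mem h2,
            Set.indicator_of_mem (hEΘ p.1 hp.1 p.2 hp.2 h.1), Pi.one_apply, one_mul, le_refl]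
        · rw [Set.indicator_of_notMem h, mul_zero]
          exact zero_le
    _ = ∫⁻ θ in Set.Ioo (-Real.pi) Real.pi, Θ.indicator 1 θ *
          ∫⁻ s in Set.Ioi (0 : ℝ), (ENNReal.ofReal s *
            D.indicator 1 (F (c + s • L (Complex.polarCoord.symm (1, θ))))) := by
        have hDm : Measurable (D.indicator (1 : ℝ → ℝ≥0∞)) := measurable_one.indicator hD
        have hm : Measurable fun p : ℝ × ℝ => Θ.indicator (1 : ℝ → ℝ≥0∞) p.2 *
            (ENNReal.ofReal p.1 *
              D.indicator 1 (F (c + L (Complex.polarCoord.symm p)))) :=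
          ((measurable_one.indicator hΘ).comp measurable_snd).mul
            (measurable_fst.ennreal_ofReal.mul
              (hDm.comp (hFd.continuous.measurable.comp hLm)))
        rw [Measure.volume_eq_prod, ← Measure.prod_restrict, lintegral_prod_symm _ hm.aemeasurable]
        refine lintegral_congr fun θ => ?_
        simp only [hpol]
        refine lintegral_const_mul' _ _ ?_
        by_cases h : θ ∈ Θ <;> simp [h]
    _ ≤ ∫⁻ θ in Set.Ioo (-Real.pi) Real.pi, Θ.indicator 1 θ *
          (ENNReal.ofReal (1 / 4) * volume D) := by
        gcongr with θ
        have hv : ‖L (Complex.polarCoord.symm (1, θ))‖ = 1 := by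
          rw [L.norm_map, Complex.norm_polarCoord_symm, abs_one]
        refine lintegral_mul_indicator_comp_le
          (f := fun s => F (c + s • L (Complex.polarCoord.symm (1, θ)))) ?_ ?_ hD
        · exact hFd.comp ((differentiable_id.smul_const _).const_add c)
        · simp only [hFs]
          exact monotoneOn_paraboloid_add hφ c hv
    _ ≤ ∫⁻ θ, Θ.indicator 1 θ * (ENNReal.ofReal (1 / 4) * volume D) :=
        setLIntegral_le_lintegral _ _
    _ = volume Θ * (ENNReal.ofReal (1 / 4) * volume D) := by
        rw [lintegral_mul_const _ (measurable_one.indicator hΘ), lintegral_indicator_one hΘ]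

/-- A planar disc of radius `r` centred at distance `d > r` is seen from the origin under an angle
of at most `2 * arcsin (r / d)`. -/
lemma mem_Ioo_arcsin_of_norm_sub_lt {r d s θ : ℝ} (hr : 0 < r) (hd : r < d) (hs : 0 < s)
    (hθ : θ ∈ Set.Ioo (-Real.pi) Real.pi)
    (h : ‖Complex.polarCoord.symm (s, θ) - d‖ < r) :
    θ ∈ Set.Ioo (-Real.arcsin (r / d)) (Real.arcsin (r / d)) := by
  have hd0 : 0 < d := hr.trans hd
  have hsq : (s * Real.cos θ - d) ^ 2 + (s * Real.sin θ) ^ 2 < r ^ 2 := by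
    have h1 : ‖Complex.polarCoord.symm (s, θ) - d‖ ^ 2 < r ^ 2 := by gcongr
    rw [Complex.polarCoord_symm_apply, ← Complex.normSq_eq_norm_sq, Complex.normSq_apply] at h1
    simp only [Complex.sub_re, Complex.mul_re, Complex.add_re, Complex.ofReal_re, Complex.I_re,
      Complex.ofReal_im, Complex.I_im, Complex.sub_im, Complex.mul_im, Complex.add_im] at h1
    linarith
  have hcs := Real.sin_sq_add_cos_sq θ
  have hsq' : s ^ 2 - 2 * s * d * Real.cos θ + d ^ 2 < r ^ 2 := by
    linear_combination hsq - s ^ 2 * hcs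
  have hcos : 0 < Real.cos θ := by
    by_contra! hneg
    have : s * d * Real.cos θ ≤ 0 := mul_nonpos_of_nonneg_of_nonpos (by positivity) hneg
    nlinarith
  have hsin : (d * Real.sin θ) ^ 2 < r ^ 2 := by
    have : (d * Real.sin θ) ^ 2 = d ^ 2 - d ^ 2 * Real.cos θ ^ 2 := by
      linear_combination d ^ 2 * hcs
    nlinarith [sq_nonneg (s - d * Real.cos θ)]
  have habs := abs_lt.1 (abs_lt_of_sq_lt_sq hsin hr.le)
  have hlt : θ < Real.pi / 2 := by
    by_contra! hge
    exact absurd hcos (Real.cos_nonpos_of_pi_div_two_le_of_le hge (by linarith [hθ.2])).not_gt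
  have hgt : -(Real.pi / 2) < θ := by
    by_contra! hge
    rw [← Real.cos_neg] at hcos
    exact absurd hcos (Real.cos_nonpos_of_pi_div_two_le_of_le (by linarith)
      (by linarith [hθ.1])).not_gt
  have hrd : r / d ∈ Set.Icc (-1 : ℝ) 1 :=
    ⟨by linarith [div_pos hr hd0], (div_le_one hd0).2 hd.le⟩
  rw [← Real.arcsin_neg]
  constructor
  · rw [Real.arcsin_lt_iff_lt_sin ⟨by linarith [hrd.2], by linarith [hrd.1]⟩ ⟨hgt.le, hlt.le⟩,
      ← neg_div, div_lt_iff₀ hd0]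
    linarith [habs.1]
  · rw [Real.lt_arcsin_iff_sin_lt ⟨hgt.le, hlt.le⟩ hrd, lt_div_iff₀ hd0]
    linarith [habs.2]

lemma exists_linearIsometryEquiv_map_norm (v : R2) : ∃ L : ℂ ≃ₗᵢ[ℝ] R2, L (‖v‖ : ℂ) = v := by
  set e : ℂ ≃ₗᵢ[ℝ] R2 := Complex.orthonormalBasisOneI.repr
  refine ⟨(rotation (Circle.exp (Complex.arg (e.symm v)))).trans e, ?_⟩
  rw [LinearIsometryEquiv.trans_apply, rotation_apply, Circle.coe_exp, ← e.symm.norm_map v,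
    mul_comm, Complex.norm_mul_exp_arg_mul_I, e.apply_symm_apply]

lemma wProj_indicator {Ψ : R2 → ℝ} {S : Set R2} (hS : MeasurableSet S) :
    wProj Ψ (S.indicator fun _ => (1 : ℝ)) =
      Measure.map (fun y => (y, Ψ y)) (volume.restrict S) := by
  have : (fun y => ENNReal.ofReal (S.indicator (fun _ => (1 : ℝ)) y)) =
      S.indicator (1 : R2 → ℝ≥0∞) := by
    ext y
    by_cases h : y ∈ S <;> simp [h]
  rw [wProj, this, withDensity_indicator_one hS]

/-- Convolutions of restricted projection measures, disintegrated along the first coordinate. -/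
lemma mconv_wProj_apply {Ψ : R2 → ℝ} (hΨ : Measurable Ψ) {S T : Set R2} (hS : MeasurableSet S)
    (hT : MeasurableSet T) {A : Set R3} (hA : MeasurableSet A) :
    mconv (wProj Ψ (S.indicator fun _ => (1 : ℝ))) (wProj Ψ (T.indicator fun _ => (1 : ℝ))) A =
      ∫⁻ ξ, volume ({y | y ∈ S ∧ ξ - y ∈ T} ∩ {y | Ψ y + Ψ (ξ - y) ∈ Prod.mk ξ ⁻¹' A}) := by
  have hG : Measurable fun y : R2 => (y, Ψ y) := measurable_id.prodMk hΨ
  have hadd : Measurable fun p : R3 × R3 => p.1 + p.2 := measurable_fst.add measurable_snd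
  set P : Set (R2 × R2) :=
    (Prod.map (fun y => (y, Ψ y)) (fun y => (y, Ψ y)) ⁻¹' ((fun p : R3 × R3 => p.1 + p.2) ⁻¹' A)) ∩
      S ×ˢ T with hP
  have hPm : MeasurableSet P := ((hG.prodMap hG) (hadd hA)).inter (hS.prod hT)
  have hPi : Measurable (P.indicator (1 : R2 × R2 → ℝ≥0∞)) := measurable_one.indicator hPm
  rw [mconv, wProj_indicator hS, wProj_indicator hT, Measure.map_prod_map _ _ hG hG,
    Measure.map_apply hadd hA, Measure.map_apply (hG.prodMap hG) (hadd hA), Measure.prod_restrict,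
    Measure.restrict_apply ((hG.prodMap hG) (hadd hA)), ← hP, ← lintegral_indicator_one hPm,
    lintegral_prod _ hPi.aemeasurable]
  calc ∫⁻ y, ∫⁻ z, P.indicator (1 : R2 × R2 → ℝ≥0∞) (y, z)
      = ∫⁻ y, ∫⁻ ξ, P.indicator (1 : R2 × R2 → ℝ≥0∞) (y, ξ - y) := by
        refine lintegral_congr fun y => ?_
        rw [lintegral_sub_right_eq_self (fun z => P.indicator (1 : R2 × R2 → ℝ≥0∞) (y, z))]
    _ = ∫⁻ ξ, ∫⁻ y, P.indicator (1 : R2 × R2 → ℝ≥0∞) (y, ξ - y) :=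
        lintegral_lintegral_swap
          (hPi.comp (measurable_fst.prodMk (measurable_snd.sub measurable_fst))).aemeasurable
    _ = _ := by
        refine lintegral_congr fun ξ => ?_
        have hm : Measurable fun y : R2 => (y, ξ - y) :=
          measurable_id.prodMk (measurable_const.sub measurable_id)
        have hset : {y | y ∈ S ∧ ξ - y ∈ T} ∩ {y | Ψ y + Ψ (ξ - y) ∈ Prod.mk ξ ⁻¹' A} =
            (fun y => (y, ξ - y)) ⁻¹' P := by
          ext y
          simp [hP, and_comm]
        rw [hset, ← lintegral_indicator_one (hm hPm)]
        rfl

lemma absolutelyContinuous_and_rnDeriv_le {α : Type*} [MeasurableSpace α] {μ ν : Measure α}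
    [SigmaFinite ν] {C : ℝ≥0∞} (h : ∀ A, MeasurableSet A → μ A ≤ C * ν A) :
    μ ≪ ν ∧ ∀ᵐ x ∂ν, μ.rnDeriv ν x ≤ C := by
  refine ⟨Measure.absolutelyContinuous_of_le_smul (c := C) (Measure.le_iff.2 h), ?_⟩
  refine ae_le_of_forall_setLIntegral_le_of_sigmaFinite (g := fun _ => C)
    (Measure.measurable_rnDeriv μ ν) fun A hA _ => ?_
  rw [setLIntegral_const]
  exact (Measure.setLIntegral_rnDeriv_le A).trans (h A hA)

/-- A uniform bound on the fibres bounds the density of the convolution. -/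
lemma mconv_wProj_bound {Ψ : R2 → ℝ} (hΨ : Measurable Ψ) {S T : Set R2} (hS : MeasurableSet S)
    (hT : MeasurableSet T) {C : ℝ≥0∞}
    (h : ∀ (ξ : R2) (D : Set ℝ), MeasurableSet D →
      volume ({y | y ∈ S ∧ ξ - y ∈ T} ∩ {y | Ψ y + Ψ (ξ - y) ∈ D}) ≤ C * volume D) :
    mconv (wProj Ψ (S.indicator fun _ => (1 : ℝ))) (wProj Ψ (T.indicator fun _ => (1 : ℝ))) ≪
        volume ∧
      ∀ᵐ x ∂(volume : Measure R3),
        (mconv (wProj Ψ (S.indicator fun _ => (1 : ℝ)))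
          (wProj Ψ (T.indicator fun _ => (1 : ℝ)))).rnDeriv volume x ≤ C := by
  refine absolutelyContinuous_and_rnDeriv_le fun A hA => ?_
  rw [mconv_wProj_apply hΨ hS hT hA, Measure.volume_eq_prod, Measure.prod_apply hA,
    ← lintegral_const_mul _ (measurable_measure_prodMk_left hA)]
  exact lintegral_mono fun ξ => h ξ _ (measurable_prodMk_left hA)

lemma measurableSet_setOf_mem_and_sub_mem {S T : Set R2} (hS : MeasurableSet S)
    (hT : MeasurableSet T) (ξ : R2) : MeasurableSet {y | y ∈ S ∧ ξ - y ∈ T} :=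
  hS.inter ((measurable_const.sub measurable_id) hT)

lemma volume_fiber_ball_compl_le {φ : R2 → ℝ} (hφ : ConvexOn ℝ Set.univ φ)
    (hd : Differentiable ℝ φ) {r ρ : ℝ} (y₀ : R2) (hr : 0 < r) (hρ : 3 * r < ρ) (ξ : R2)
    {D : Set ℝ} (hD : MeasurableSet D) :
    volume ({y | y ∈ Metric.ball y₀ r ∧ ξ - y ∈ (Metric.ball y₀ ρ)ᶜ} ∩
        {y | (‖y‖ ^ 2 + φ y) + (‖ξ - y‖ ^ 2 + φ (ξ - y)) ∈ D}) ≤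
      ENNReal.ofReal ((1 / 2) * Real.arcsin (2 * r / (ρ - r))) * volume D := by
  have hE := measurableSet_setOf_mem_and_sub_mem (measurableSet_ball (x := y₀) (ε := r))
    (measurableSet_ball (x := y₀) (ε := ρ)).compl ξ
  set E : Set R2 := {y | y ∈ Metric.ball y₀ r ∧ ξ - y ∈ (Metric.ball y₀ ρ)ᶜ} with hE_def
  set v : R2 := y₀ - (1 / 2 : ℝ) • ξ with hv
  obtain ⟨L, hL⟩ := exists_linearIsometryEquiv_map_norm v
  set a := Real.arcsin (2 * r / (ρ - r)) with ha
  have key := volume_inter_fiber_le hφ hd L ξ hE (measurableSet_Ioo (a := -a) (b := a)) ?_ hD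
  · refine key.trans_eq ?_
    rw [Real.volume_Ioo, ← mul_assoc, ← ENNReal.ofReal_mul' (by norm_num)]
    congr 2
    ring
  · intro s hs θ hθ hmem
    set w := Complex.polarCoord.symm (s, θ)
    have h1 : ‖w - (‖v‖ : ℂ)‖ < r := by
      have := hmem.1
      rw [mem_ball_iff_norm] at this
      rw [← L.norm_map, map_sub, hL, hv]
      convert this using 2
      abel
    have h2 : (ρ - r) / 2 ≤ ‖v‖ := by
      have h3 := hmem.2
      rw [Set.mem_compl_iff, mem_ball_iff_norm, not_lt] at h3
      have h4 := mem_ball_iff_norm.1 hmem.1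
      have h5 : ‖(2 : ℝ) • v‖ = 2 * ‖v‖ := by rw [norm_smul]; norm_num
      set y := (1 / 2 : ℝ) • ξ + L w
      have h6 : ξ - y - y₀ = -((2 : ℝ) • v) - (y - y₀) := by rw [hv]; module
      have h7 := norm_sub_le (-((2 : ℝ) • v)) (y - y₀)
      rw [← h6, norm_neg, h5] at h7
      linarith
    have h8 := mem_Ioo_arcsin_of_norm_sub_lt hr (by linarith : r < ‖v‖) hs hθ h1
    have h9 : Real.arcsin (r / ‖v‖) ≤ a := by
      refine Real.monotone_arcsin ?_
      rw [div_le_div_iff₀ (by linarith) (by linarith)]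
      nlinarith
    exact ⟨by linarith [h8.1], by linarith [h8.2]⟩

lemma volume_fiber_disjoint_le {φ : R2 → ℝ} (hφ : ConvexOn ℝ Set.univ φ)
    (hd : Differentiable ℝ φ) {S T : Set R2} (hS : MeasurableSet S) (hT : MeasurableSet T)
    (hST : Disjoint S T) (ξ : R2) {D : Set ℝ} (hD : MeasurableSet D) :
    volume ({y | y ∈ S ∧ ξ - y ∈ T} ∩
        {y | (‖y‖ ^ 2 + φ y) + (‖ξ - y‖ ^ 2 + φ (ξ - y)) ∈ D}) ≤
      ENNReal.ofReal (Real.pi / 4) * volume D := by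
  set F : R2 → ℝ := fun y => (‖y‖ ^ 2 + φ y) + (‖ξ - y‖ ^ 2 + φ (ξ - y)) with hF
  have hFm : Measurable F := by
    have h1 : Continuous φ := hd.continuous
    have h2 : Continuous F := by fun_prop
    exact h2.measurable
  have hX := (measurableSet_setOf_mem_and_sub_mem hS hT ξ).inter (hFm hD)
  set X : Set R2 := {y | y ∈ S ∧ ξ - y ∈ T} ∩ F ⁻¹' D with hX_def
  have hmp : MeasurePreserving (fun y : R2 => ξ - y) volume volume :=
    Measure.measurePreserving_sub_left volume ξ
  have hrefl : volume ((fun y : R2 => ξ - y) ⁻¹' X) = volume X :=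
    hmp.measure_preimage hX.nullMeasurableSet
  have hdisj : Disjoint X ((fun y : R2 => ξ - y) ⁻¹' X) := by
    refine Set.disjoint_left.2 fun y hy hy' => ?_
    exact Set.disjoint_left.1 hST hy'.1.1 hy.1.2
  have hsub : X ∪ (fun y : R2 => ξ - y) ⁻¹' X ⊆ Set.univ ∩ F ⁻¹' D := by
    rintro y (hy | hy)
    · exact ⟨trivial, hy.2⟩
    · refine ⟨trivial, ?_⟩
      have h1 : F (ξ - y) ∈ D := hy.2
      have h2 : F (ξ - y) = F y := by simp only [hF, sub_sub_cancel, add_comm]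
      rwa [h2] at h1
  have hfull := volume_inter_fiber_le hφ hd Complex.orthonormalBasisOneI.repr ξ
    MeasurableSet.univ (measurableSet_Ioo (a := -Real.pi) (b := Real.pi))
    (fun _ _ _ hθ _ => hθ) hD
  have htwo : 2 * volume X ≤ 2 * (ENNReal.ofReal (Real.pi / 4) * volume D) :=
    calc 2 * volume X = volume (X ∪ (fun y : R2 => ξ - y) ⁻¹' X) := by
          rw [measure_union hdisj (hmp.measurable hX), hrefl, two_mul]
      _ ≤ volume (Set.univ ∩ F ⁻¹' D) := measure_mono hsub
      _ ≤ _ := hfull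
      _ = 2 * (ENNReal.ofReal (Real.pi / 4) * volume D) := by
          rw [Real.volume_Ioo, ← mul_assoc, ← mul_assoc, ← ENNReal.ofReal_mul' (by norm_num),
            ← ENNReal.ofReal_ofNat 2, ← ENNReal.ofReal_mul (by norm_num)]
          congr 2
          ring
  exact (ENNReal.mul_le_mul_iff_right two_ne_zero ENNReal.ofNat_ne_top).1 htwo

theorem statement17 (φ : R2 → ℝ) (hφ0 : ∀ y, 0 ≤ φ y) (hφC2 : ContDiff ℝ 2 φ)
    (hφconv : StrictConvexOn ℝ Set.univ φ)
    (ψ : R2 → ℝ) (hψ : ψ = fun y => ‖y‖ ^ 2 + φ y) :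
    (∀ (r ρ : ℝ) (y₀ : R2), 0 < r → 0 < ρ → 3 * r < ρ →
      mconv (wProj ψ ((Metric.ball y₀ r).indicator fun _ => (1:ℝ)))
          (wProj ψ (((Metric.ball y₀ ρ)ᶜ).indicator fun _ => (1:ℝ))) ≪ volume ∧
      ∀ᵐ x ∂(volume : Measure R3),
        (mconv (wProj ψ ((Metric.ball y₀ r).indicator fun _ => (1:ℝ)))
            (wProj ψ (((Metric.ball y₀ ρ)ᶜ).indicator fun _ => (1:ℝ)))).rnDeriv
            volume x ≤
          ENNReal.ofReal ((1 / 2) * Real.arcsin (2 * r / (ρ - r)))) ∧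
    ∀ (y₁ y₂ : R2) (r₁ r₂ : ℝ), Disjoint (Metric.ball y₁ r₁) (Metric.ball y₂ r₂) →
      mconv (wProj ψ ((Metric.ball y₁ r₁).indicator fun _ => (1:ℝ)))
          (wProj ψ ((Metric.ball y₂ r₂).indicator fun _ => (1:ℝ))) ≪ volume ∧
      ∀ᵐ x ∂(volume : Measure R3),
        (mconv (wProj ψ ((Metric.ball y₁ r₁).indicator fun _ => (1:ℝ)))
            (wProj ψ ((Metric.ball y₂ r₂).indicator fun _ => (1:ℝ)))).rnDeriv
            volume x ≤ ENNReal.ofReal (Real.pi / 4) := by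
  have hd : Differentiable ℝ φ := hφC2.differentiable (by norm_num)
  have hΨ : Measurable ψ := by
    have h1 : Continuous φ := hd.continuous
    have h2 : Continuous ψ := by rw [hψ]; fun_prop
    exact h2.measurable
  refine ⟨fun r ρ y₀ hr _ hρ => ?_, fun y₁ y₂ r₁ r₂ hdisj => ?_⟩
  · refine mconv_wProj_bound hΨ measurableSet_ball measurableSet_ball.compl fun ξ D hD => ?_
    subst hψ
    exact volume_fiber_ball_compl_le hφconv.convexOn hd y₀ hr hρ ξ hD
  · refine mconv_wProj_bound hΨ measurableSet_ball measurableSet_ball fun ξ D hD => ?_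
    subst hψ
    exact volume_fiber_disjoint_le hφconv.convexOn hd measurableSet_ball measurableSet_ball
      hdisj ξ hD
end
end
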